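/- arXiv:0903.2374 — 4 statements merged into one kernel-verified Lean document; each statement's English description precedes it below -/
import Mathlib

section
/- Let Γ be an ordinal and let f : [Γ]² → {0,1} be a partition of the first kind. Define P_f : ℓ₁(Γ) → ℂ by P_f(x) = Σ_{{α,β} ∈ [Γ]², f{α,β} = 1} x_α x_β (this sum converges absolutely for every x ∈ ℓ₁(Γ)). Then every linear subspace Y of ℓ₁(Γ) such that P_f(y) = 0 for all y ∈ Y is separable. -/
noncomputable section

/-- The complex Banach space `ℓ₁(Γ)`. -/
abbrev ell1 (Γ : Type*) : Type _ := lp (fun _ : Γ => ℂ) 1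

/-- `f : [Γ]² → 2` is a *partition of the first kind* if for every uncountable family `A` of
pairwise disjoint subsets of `Γ`, all of some fixed finite cardinality `n` (such a subset is
encoded by the strictly monotone enumeration `Fin n → Γ` of its elements), and for every
`k < n`, there exist `a, b, a', b' ∈ A` with `a ≠ b`, `a' ≠ b'` such that
`f {a(k), b(k)} = 1`, `f {a'(k), b'(k)} = 0`, and `f {a(i), b(j)} = f {a'(i), b'(j)}`
whenever `(i, j) ≠ (k, k)`. -/
def IsPartitionFirstKind {Γ : Type*} [LinearOrder Γ] (f : Sym2 Γ → Fin 2) : Prop :=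
  ∀ (n : ℕ) (A : Set (Fin n → Γ)),
    ¬ A.Countable →
    (∀ a ∈ A, StrictMono a) →
    (A.Pairwise fun a b => Disjoint (Set.range a) (Set.range b)) →
    ∀ k : Fin n,
      ∃ a ∈ A, ∃ b ∈ A, ∃ a' ∈ A, ∃ b' ∈ A,
        a ≠ b ∧ a' ≠ b' ∧
        f s(a k, b k) = 1 ∧ f s(a' k, b' k) = 0 ∧
        ∀ i j : Fin n, (i, j) ≠ (k, k) → f s(a i, b j) = f s(a' i, b' j)

/-- The quadratic functional `P_f(x) = Σ_{{α,β} ∈ [Γ]², f{α,β} = 1} x_α x_β` associated to a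
partition `f : [Γ]² → 2`, where the unordered pairs `{α, β}` with `α < β` are encoded by
ordered pairs. -/
def Pf {Γ : Type*} [LinearOrder Γ] (f : Sym2 Γ → Fin 2) (x : ell1 Γ) : ℂ :=
  ∑' p : Γ × Γ, if p.1 < p.2 ∧ f s(p.1, p.2) = 1 then x p.1 * x p.2 else 0

/-!
If the members of `Y` charge uncountably many coordinates `γ`, choose `y_γ ∈ Y` with `y_γ(γ) = 1`
and uniformly bounded norms, and approximate each by a finitely supported `z_γ` with values in a
fixed countable dense subring `K` of `ℂ`. By the Δ-system lemma and the pigeonhole principle we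
may assume `z_γ = w + ∑ t, c t • e_{a γ t}`, where `w` and `c` do not depend on `γ`, the sets
`range (a γ)` are pairwise disjoint, and `γ = a γ k` for a fixed `k`. Let `B` be the polarization
of `P_f`. The cross terms `B(w, z_γ - w)` lie in the countable ring `K`, so they may be assumed
constant too. Now a partition of the first kind provides `i, j, i', j'` for which `B(z_i, z_j)`
and `B(z_i', z_j')` differ only in the entry `(k, k)`, that is, by `(c k)²`, which is close to
`1`. But `B` vanishes on `Y`, so both values are close to `0`.
-/

section UncountableFamilies

theorem exists_not_countable_setOf_of_forall_exists {ι X : Type*} [Countable X] {S : Set ι}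
    (hS : ¬ S.Countable) {P : ι → X → Prop} (hP : ∀ i ∈ S, ∃ x, P i x) :
    ∃ x, ¬ {i ∈ S | P i x}.Countable := by
  by_contra! hcount
  refine hS ((Set.countable_iUnion hcount).mono fun i hi => ?_)
  obtain ⟨x, hx⟩ := hP i hi
  exact Set.mem_iUnion.2 ⟨x, hi, hx⟩

variable {ι α : Type*}

theorem exists_maximal_pairwise_subset (S : Set ι) (r : ι → ι → Prop) :
    ∃ J, Maximal (fun J : Set ι => J ⊆ S ∧ J.Pairwise r) J :=
  zorn_subset {J | J ⊆ S ∧ J.Pairwise r} fun c hc hchain =>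
    ⟨⋃₀ c, ⟨Set.sUnion_subset fun _ hJ => (hc hJ).1,
      (Set.pairwise_sUnion hchain.directedOn).2 fun _ hJ => (hc hJ).2⟩,
      fun _ => Set.subset_sUnion_of_mem⟩

theorem exists_not_countable_pairwise_disjoint {S : Set ι} (hS : ¬ S.Countable)
    (s : ι → Finset α) (hs : ∀ x, {i ∈ S | x ∈ s i}.Countable) :
    ∃ J ⊆ S, ¬ J.Countable ∧ J.Pairwise fun i j => Disjoint (s i) (s j) := by
  obtain ⟨J, hJ⟩ := exists_maximal_pairwise_subset S fun i j => Disjoint (s i) (s j)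
  refine ⟨J, hJ.prop.1, fun hJc => hS ?_, hJ.prop.2⟩
  have hmeet : (⋃ j ∈ J, ⋃ x ∈ s j, {i ∈ S | x ∈ s i}).Countable :=
    hJc.biUnion fun j _ => (s j).countable_toSet.biUnion fun x _ => hs x
  refine (hJc.union hmeet).mono fun i hi => or_iff_not_imp_right.2 fun hi_meet => ?_
  have hdisj : ∀ j ∈ J, Disjoint (s i) (s j) := fun j hj =>
    Finset.disjoint_left.2 fun x hxi hxj => hi_meet <|
      Set.mem_biUnion hj (Set.mem_biUnion (Finset.mem_coe.2 hxj) ⟨hi, hxi⟩)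
  exact hJ.mem_of_prop_insert ⟨Set.insert_subset hi hJ.prop.1,
    hJ.prop.2.insert fun j hj _ => ⟨hdisj j hj, (hdisj j hj).symm⟩⟩

variable [DecidableEq α]

theorem exists_not_countable_pairwise_inter_eq_of_card_eq (m : ℕ) {S : Set ι}
    (hS : ¬ S.Countable) (s : ι → Finset α) (hs : ∀ i ∈ S, (s i).card = m) :
    ∃ J ⊆ S, ¬ J.Countable ∧ ∃ R, J.Pairwise fun i j => s i ∩ s j = R := by
  induction m generalizing S s with
  | zero =>
    refine ⟨S, subset_rfl, hS, ∅, fun i hi j _ _ => ?_⟩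
    simp only [Finset.card_eq_zero.1 (hs i hi), Finset.empty_inter]
  | succ m ih =>
    by_cases hpoint : ∃ x, ¬ {i ∈ S | x ∈ s i}.Countable
    · obtain ⟨x, hx⟩ := hpoint
      obtain ⟨J, hJS, hJ, R, hR⟩ := ih hx (fun i => (s i).erase x) fun i hi => by
        rw [Finset.card_erase_of_mem hi.2, hs i hi.1, Nat.add_sub_cancel]
      refine ⟨J, fun i hi => (hJS hi).1, hJ, insert x R, fun i hi j hj hij => ?_⟩
      have hxi := (hJS hi).2
      have hxj := (hJS hj).2
      grind [hR hi hj hij]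
    · push Not at hpoint
      obtain ⟨J, hJS, hJ, hdisj⟩ := exists_not_countable_pairwise_disjoint hS s hpoint
      exact ⟨J, hJS, hJ, ∅, hdisj.imp fun _ _ => Finset.disjoint_iff_inter_eq_empty.1⟩

/-- The Δ-system lemma for uncountable families of finite sets. -/
theorem exists_not_countable_pairwise_inter_eq {S : Set ι} (hS : ¬ S.Countable)
    (s : ι → Finset α) :
    ∃ J ⊆ S, ¬ J.Countable ∧ ∃ R, J.Pairwise fun i j => s i ∩ s j = R := by
  obtain ⟨m, hm⟩ := exists_not_countable_setOf_of_forall_exists hS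
    (P := fun i m => (s i).card = m) fun i _ => ⟨_, rfl⟩
  obtain ⟨J, hJ, hJR⟩ :=
    exists_not_countable_pairwise_inter_eq_of_card_eq m hm s fun i hi => hi.2
  exact ⟨J, fun i hi => (hJ hi).1, hJR⟩

end UncountableFamilies

section HomogeneousFamilies

variable {Γ K : Type*} [AddCommMonoid K]

theorem filter_notMem_eq_sum_single {ι : Type*} [Fintype ι] [DecidableEq Γ] (z : Γ →₀ K)
    (R : Finset Γ) {a : ι → Γ} (ha : a.Injective) (hrange : Set.range a = ↑(z.support \ R)) :
    z.filter (· ∉ R) = ∑ t, Finsupp.single (a t) (z (a t)) := by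
  have himage : Finset.univ.image a = z.support \ R := by
    rw [← Finset.coe_inj, Finset.coe_image, Finset.coe_univ, Set.image_univ, hrange]
  have hsupport : (z.filter (· ∉ R)).support = Finset.univ.image a := by
    rw [Finsupp.support_filter, himage, Finset.filter_notMem_eq_sdiff]
  rw [← (z.filter (· ∉ R)).sum_single, Finsupp.sum, hsupport, Finset.sum_image ha.injOn]
  refine Finset.sum_congr rfl fun t _ => ?_
  have ht : a t ∈ z.support \ R := himage ▸ Finset.mem_image_of_mem a (Finset.mem_univ t)
  rw [Finsupp.filter_apply_pos (· ∉ R) z (Finset.mem_sdiff.1 ht).2]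

variable [LinearOrder Γ]

/-- `z` splits into a part `r` supported on the root `R` and a part supported off `R`, whose
coefficients `c` are listed in increasing order of their indices `a`; the index `γ` occupies the
place `k` of this list. -/
structure IsSplitting {n : ℕ} (R : Finset Γ) (z : Γ →₀ K) (γ : Γ) (r : R →₀ K) (k : Fin n)
    (c : Fin n → K) (a : Fin n → Γ) : Prop where
  strictMono : StrictMono a
  range_eq : Set.range a = ↑(z.support \ R)
  apply_place : a k = γ
  coeff_place : c k = z γ
  eq_add : z = r.extendDomain + ∑ t, Finsupp.single (a t) (c t)

theorem exists_isSplitting (R : Finset Γ) (z : Γ →₀ K) {γ : Γ} (hγ : γ ∈ z.support \ R) :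
    ∃ (n : ℕ) (r : R →₀ K) (k : Fin n) (c : Fin n → K) (a : Fin n → Γ),
      IsSplitting R z γ r k c a := by
  have hrange := (z.support \ R).range_orderEmbOfFin rfl
  obtain ⟨k, hk⟩ : γ ∈ Set.range ((z.support \ R).orderEmbOfFin rfl) := by
    rwa [hrange, Finset.mem_coe]
  have hroot : (z.subtypeDomain (· ∈ R)).extendDomain = z.filter (· ∈ R) := by
    ext α
    simp [Finsupp.filter_apply]
  refine ⟨_, z.subtypeDomain (· ∈ R), k, fun t => z ((z.support \ R).orderEmbOfFin rfl t),
    (z.support \ R).orderEmbOfFin rfl, OrderEmbedding.strictMono _, hrange, hk,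
    congrArg z hk, ?_⟩
  rw [hroot, ← filter_notMem_eq_sum_single z R (OrderEmbedding.strictMono _).injective hrange,
    Finsupp.filter_add_filter_not]

theorem exists_not_countable_isSplitting [Countable K] {S : Set Γ} (hS : ¬ S.Countable)
    {z : Γ → Γ →₀ K} (hz : ∀ γ ∈ S, z γ γ ≠ 0) :
    ∃ J ⊆ S, ¬ J.Countable ∧ ∃ (R : Finset Γ) (n : ℕ) (r : R →₀ K) (k : Fin n) (c : Fin n → K)
      (a : Γ → Fin n → Γ), (∀ γ ∈ J, IsSplitting R (z γ) γ r k c (a γ)) ∧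
        J.Pairwise fun i j => Disjoint (Set.range (a i)) (Set.range (a j)) := by
  have : Nonempty Γ := not_isEmpty_iff.1 fun _ => hS S.to_countable
  obtain ⟨J, hJS, hJ, R, hR⟩ := exists_not_countable_pairwise_inter_eq hS fun γ => (z γ).support
  have hJR : ¬ (J \ R).Countable := fun h =>
    hJ ((h.union R.countable_toSet).mono (Set.subset_sdiff_union J R))
  obtain ⟨⟨r, n, k, c⟩, hsplit⟩ := exists_not_countable_setOf_of_forall_exists hJR
    (X := (R →₀ K) × Σ n : ℕ, Fin n × (Fin n → K))
    (P := fun γ p => ∃ a, IsSplitting R (z γ) γ p.1 p.2.2.1 p.2.2.2 a) fun γ hγ => by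
      obtain ⟨n, r, k, c, ha⟩ := exists_isSplitting R (z γ) <|
        Finset.mem_sdiff.2 ⟨Finsupp.mem_support_iff.2 (hz γ (hJS hγ.1)), hγ.2⟩
      exact ⟨(r, ⟨n, k, c⟩), ha⟩
  choose! a ha using fun γ
    (hγ : γ ∈ {γ ∈ J \ R | ∃ a, IsSplitting R (z γ) γ r k c a}) => hγ.2
  refine ⟨_, fun γ hγ => hJS hγ.1.1, hsplit, R, n, r, k, c, a, ha, fun i hi j hj hij => ?_⟩
  have hroot : (z i).support ∩ (z j).support = R := hR hi.1.1 hj.1.1 hij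
  simp only [(ha i hi).range_eq, (ha j hj).range_eq, Finset.disjoint_coe]
  grind [Finset.disjoint_left]

end HomogeneousFamilies

section KernelForms

/-- The bilinear form `(z, w) ↦ ∑ i, ∑ j, z i * w j * k i j` on finitely supported functions. -/
def finsuppKernelForm {ι κ K : Type*} [CommSemiring K] (k : ι → κ → K) :
    (ι →₀ K) →ₗ[K] (κ →₀ K) →ₗ[K] K :=
  Finsupp.linearCombination K fun i => Finsupp.linearCombination K (k i)

theorem finsuppKernelForm_single_single {ι κ K : Type*} [CommSemiring K] (k : ι → κ → K) (i : ι)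
    (j : κ) (x y : K) :
    finsuppKernelForm k (Finsupp.single i x) (Finsupp.single j y) = k i j * (x * y) := by
  simp only [finsuppKernelForm, Finsupp.linearCombination_single, LinearMap.smul_apply,
    smul_eq_mul]
  ring

variable {ι κ : Type*} {k : ι → κ → ℂ} {C : ℝ}

theorem ell1.hasSum_norm (x : ell1 ι) : HasSum (fun i => ‖x i‖) ‖x‖ := by
  simpa using lp.hasSum_norm (p := 1) (by simp) x

theorem ell1.hasSum_norm_mul_norm (x : ell1 ι) (y : ell1 κ) :
    HasSum (fun p : ι × κ => ‖x p.1‖ * ‖y p.2‖) (‖x‖ * ‖y‖) :=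
  x.hasSum_norm.mul y.hasSum_norm <| x.hasSum_norm.summable.mul_of_nonneg y.hasSum_norm.summable
    (fun _ => norm_nonneg _) fun _ => norm_nonneg _

theorem norm_kernel_mul_le (hk : ∀ i j, ‖k i j‖ ≤ C) (x : ell1 ι) (y : ell1 κ) (p : ι × κ) :
    ‖k p.1 p.2 * (x p.1 * y p.2)‖ ≤ C * (‖x p.1‖ * ‖y p.2‖) := by
  rw [norm_mul, norm_mul]
  gcongr
  exact hk _ _

theorem summable_norm_kernel_mul (hk : ∀ i j, ‖k i j‖ ≤ C) (x : ell1 ι) (y : ell1 κ) :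
    Summable fun p : ι × κ => ‖k p.1 p.2 * (x p.1 * y p.2)‖ :=
  ((ell1.hasSum_norm_mul_norm x y).summable.mul_left C).of_nonneg_of_le
    (fun _ => norm_nonneg _) (norm_kernel_mul_le hk x y)

theorem norm_tsum_kernel_mul_le (hk : ∀ i j, ‖k i j‖ ≤ C) (x : ell1 ι) (y : ell1 κ) :
    ‖∑' p : ι × κ, k p.1 p.2 * (x p.1 * y p.2)‖ ≤ C * ‖x‖ * ‖y‖ := by
  rw [mul_assoc]
  exact tsum_of_norm_bounded ((ell1.hasSum_norm_mul_norm x y).mul_left C)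
    (norm_kernel_mul_le hk x y)

/-- The continuous bilinear form on `ℓ₁(ι) × ℓ₁(κ)` with bounded kernel `k`. -/
def ell1KernelForm (k : ι → κ → ℂ) (hk : ∀ i j, ‖k i j‖ ≤ C) :
    ell1 ι →L[ℂ] ell1 κ →L[ℂ] ℂ :=
  have hsum (x : ell1 ι) (y : ell1 κ) := (summable_norm_kernel_mul hk x y).of_norm
  LinearMap.mkContinuous₂
    (LinearMap.mk₂ ℂ (fun x y => ∑' p : ι × κ, k p.1 p.2 * (x p.1 * y p.2))
      (fun x x' y => by
        rw [← (hsum x y).tsum_add (hsum x' y)]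
        exact tsum_congr fun p => by rw [lp.coeFn_add, Pi.add_apply]; ring)
      (fun c x y => by
        rw [smul_eq_mul, ← tsum_mul_left]
        exact tsum_congr fun p => by rw [lp.coeFn_smul, Pi.smul_apply, smul_eq_mul]; ring)
      (fun x y y' => by
        rw [← (hsum x y).tsum_add (hsum x y')]
        exact tsum_congr fun p => by rw [lp.coeFn_add, Pi.add_apply]; ring)
      (fun c x y => by
        rw [smul_eq_mul, ← tsum_mul_left]
        exact tsum_congr fun p => by rw [lp.coeFn_smul, Pi.smul_apply, smul_eq_mul]; ring))
    C (norm_tsum_kernel_mul_le hk)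

theorem ell1KernelForm_apply (hk : ∀ i j, ‖k i j‖ ≤ C) (x : ell1 ι) (y : ell1 κ) :
    ell1KernelForm k hk x y = ∑' p : ι × κ, k p.1 p.2 * (x p.1 * y p.2) :=
  rfl

theorem norm_ell1KernelForm_apply_le (hk : ∀ i j, ‖k i j‖ ≤ C) (x : ell1 ι) (y : ell1 κ) :
    ‖ell1KernelForm k hk x y‖ ≤ C * ‖x‖ * ‖y‖ :=
  norm_tsum_kernel_mul_le hk x y

theorem ell1KernelForm_add_swap {k k' : ι → ι → ℂ} {C' : ℝ} (hk : ∀ i j, ‖k i j‖ ≤ C)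
    (hk' : ∀ i j, ‖k' i j‖ ≤ C') (hsymm : ∀ i j, k i j + k j i = k' i j) (x y : ell1 ι) :
    ell1KernelForm k hk x y + ell1KernelForm k hk y x = ell1KernelForm k' hk' x y := by
  have hsum := (summable_norm_kernel_mul hk x y).of_norm
  have hsum_swap : Summable fun p : ι × ι => k p.2 p.1 * (y p.2 * x p.1) :=
    (Equiv.prodComm ι ι).summable_iff.2 (summable_norm_kernel_mul hk y x).of_norm
  have hswap : ∑' p : ι × ι, k p.1 p.2 * (y p.1 * x p.2) =
      ∑' p : ι × ι, k p.2 p.1 * (y p.2 * x p.1) :=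
    ((Equiv.prodComm ι ι).tsum_eq _).symm
  simp only [ell1KernelForm_apply]
  rw [hswap, ← hsum.tsum_add hsum_swap]
  refine tsum_congr fun p => ?_
  rw [← hsymm]
  ring

theorem ell1KernelForm_single_single [DecidableEq ι] [DecidableEq κ] (hk : ∀ i j, ‖k i j‖ ≤ C)
    (i : ι) (j : κ) (x y : ℂ) :
    ell1KernelForm k hk (lp.single 1 i x) (lp.single 1 j y) = k i j * (x * y) := by
  rw [ell1KernelForm_apply, tsum_eq_single (i, j), lp.single_apply_self, lp.single_apply_self]
  rintro ⟨i', j'⟩ hne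
  by_cases hi : i' = i
  · have hj : j' ≠ j := fun hj => hne (by rw [hi, hj])
    simp only [lp.single_apply_ne (E := fun _ => ℂ) 1 j y hj, mul_zero]
  · simp only [lp.single_apply_ne (E := fun _ => ℂ) 1 i x hi, zero_mul, mul_zero]

end KernelForms

section FiniteSupport

variable {Γ : Type*}

theorem exists_countable_dense_subring (A : Type*) [Ring A] [TopologicalSpace A]
    [TopologicalSpace.SeparableSpace A] : ∃ K : Subring A, Countable K ∧ Dense (K : Set A) := by
  obtain ⟨s, hs, hdense⟩ := TopologicalSpace.exists_countable_dense A
  refine ⟨(Algebra.adjoin ℤ s).toSubring, ?_, hdense.mono Algebra.subset_adjoin⟩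
  have hcard := Algebra.lift_cardinalMk_adjoin_le ℤ s
  rw [← Cardinal.mk_le_aleph0_iff, ← Cardinal.lift_le_aleph0]
  exact hcard.trans (by simp [hs])

theorem isSeparable_of_countable_setOf_apply_ne_zero {Y : Set (ell1 Γ)}
    (hY : {γ | ∃ y ∈ Y, y γ ≠ 0}.Countable) : TopologicalSpace.IsSeparable Y := by
  classical
  set basis : Γ → ell1 Γ := fun γ => lp.single 1 γ (1 : ℂ)
  refine ((hY.image basis).isSeparable.span (R := ℂ)).closure.mono fun y hy => ?_
  refine mem_closure_of_tendsto (lp.hasSum_single ENNReal.one_ne_top y)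
    (Filter.Eventually.of_forall fun s => Submodule.sum_mem _ fun γ _ => ?_)
  have hsmul : (lp.single 1 γ (y γ) : ell1 Γ) = y γ • basis γ := by
    rw [← lp.single_smul, smul_eq_mul, mul_one]
  rw [hsmul]
  by_cases hγ : y γ = 0
  · rw [hγ, zero_smul]
    exact zero_mem _
  · exact Submodule.smul_mem _ _ (Submodule.subset_span ⟨γ, ⟨y, hy, hγ⟩, rfl⟩)

variable [DecidableEq Γ]

/-- The inclusion of the finitely supported `K`-valued functions into `ℓ₁(Γ)`. -/
def finsuppToEll1 (K : Subring ℂ) : (Γ →₀ K) →+ ell1 Γ :=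
  Finsupp.liftAddHom fun γ =>
    (lp.singleAddMonoidHom 1 γ).comp (K.subtype : K →+ ℂ)

theorem finsuppToEll1_single (K : Subring ℂ) (γ : Γ) (c : K) :
    finsuppToEll1 K (Finsupp.single γ c) = lp.single 1 γ (c : ℂ) :=
  Finsupp.liftAddHom_apply_single _ _ _

theorem finsuppToEll1_apply (K : Subring ℂ) (z : Γ →₀ K) (γ : Γ) :
    finsuppToEll1 K z γ = z γ := by
  induction z using Finsupp.induction_linear with
  | zero => simp
  | add z w hz hw => simp [hz, hw]
  | single α c =>
    rw [finsuppToEll1_single, lp.single_apply, Finsupp.single_eq_pi_single]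
    exact (Pi.apply_single (fun _ => K.subtype) (fun _ => map_zero _) α c γ).symm

theorem denseRange_finsuppToEll1 {K : Subring ℂ} (hK : Dense (K : Set ℂ)) :
    DenseRange (finsuppToEll1 (Γ := Γ) K) := by
  set T := (finsuppToEll1 (Γ := Γ) K).range.topologicalClosure
  have hclosed : IsClosed (T : Set (ell1 Γ)) := AddSubgroup.isClosed_topologicalClosure _
  have hsingle : ∀ γ (c : ℂ), (lp.single 1 γ c : ell1 Γ) ∈ T := fun γ =>
    hK.induction (fun c hc => subset_closure ⟨Finsupp.single γ ⟨c, hc⟩, finsuppToEll1_single ..⟩)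
      (hclosed.preimage (lp.isometry_single γ).continuous)
  intro x
  exact hclosed.mem_of_tendsto (lp.hasSum_single ENNReal.one_ne_top x)
    (Filter.Eventually.of_forall fun s => T.sum_mem fun γ _ => hsingle γ (x γ))

theorem ell1KernelForm_finsuppToEll1 {ι κ : Type*} [DecidableEq ι] [DecidableEq κ]
    {K : Subring ℂ} {C : ℝ} (k : ι → κ → K) (hk : ∀ i j, ‖(k i j : ℂ)‖ ≤ C) (z : ι →₀ K)
    (w : κ →₀ K) :
    ell1KernelForm (fun i j => (k i j : ℂ)) hk (finsuppToEll1 K z) (finsuppToEll1 K w) =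
      finsuppKernelForm k z w := by
  induction z using Finsupp.induction_linear with
  | zero => simp
  | add z z' hz hz' => simp [hz, hz']
  | single i x =>
    induction w using Finsupp.induction_linear with
    | zero => simp
    | add w w' hw hw' => simp [hw, hw']
    | single j y =>
      simp [finsuppToEll1_single, ell1KernelForm_single_single, finsuppKernelForm_single_single]

end FiniteSupport

section PartitionForms

variable {Γ : Type*}

/-- The kernel of the polarization of `Pf f`. The clause `α ≠ β` is needed because `Sym2 Γ`, unlike
`[Γ]²`, contains the diagonal. -/
def pairKernel [DecidableEq Γ] (K : Type*) [Zero K] [One K] (f : Sym2 Γ → Fin 2) (α β : Γ) : K :=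
  if α ≠ β ∧ f s(α, β) = 1 then 1 else 0

/-- The kernel of the non-symmetric bilinear form whose diagonal is `Pf f`. -/
def orderedPairKernel [LinearOrder Γ] (f : Sym2 Γ → Fin 2) (α β : Γ) : ℂ :=
  if α < β ∧ f s(α, β) = 1 then 1 else 0

theorem norm_pairKernel_le_one [DecidableEq Γ] (f : Sym2 Γ → Fin 2) (α β : Γ) :
    ‖pairKernel ℂ f α β‖ ≤ 1 := by
  unfold pairKernel
  split_ifs <;> simp

theorem coe_pairKernel [DecidableEq Γ] (K : Subring ℂ) (f : Sym2 Γ → Fin 2) (α β : Γ) :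
    (pairKernel K f α β : ℂ) = pairKernel ℂ f α β := by
  unfold pairKernel
  split_ifs <;> simp

theorem finsuppKernelForm_pairKernel_sub [DecidableEq Γ] {K : Type*} [CommRing K]
    {f : Sym2 Γ → Fin 2} {n : ℕ} {k : Fin n} {a b a' b' : Fin n → Γ}
    (hab : Disjoint (Set.range a) (Set.range b)) (hab' : Disjoint (Set.range a') (Set.range b'))
    (hone : f s(a k, b k) = 1) (hzero : f s(a' k, b' k) = 0)
    (heq : ∀ i j, (i, j) ≠ (k, k) → f s(a i, b j) = f s(a' i, b' j)) (c : Fin n → K) :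
    finsuppKernelForm (pairKernel K f) (∑ t, Finsupp.single (a t) (c t))
        (∑ t, Finsupp.single (b t) (c t)) -
      finsuppKernelForm (pairKernel K f) (∑ t, Finsupp.single (a' t) (c t))
        (∑ t, Finsupp.single (b' t) (c t)) = c k ^ 2 := by
  have hne : ∀ i j, a i ≠ b j := fun i j => hab.ne_of_mem ⟨i, rfl⟩ ⟨j, rfl⟩
  have hne' : ∀ i j, a' i ≠ b' j := fun i j => hab'.ne_of_mem ⟨i, rfl⟩ ⟨j, rfl⟩
  have hkernel : ∀ i j, pairKernel K f (a i) (b j) - pairKernel K f (a' i) (b' j) =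
      if i = k then if j = k then 1 else 0 else 0 := by
    intro i j
    grind [pairKernel]
  simp only [map_sum, LinearMap.sum_apply, finsuppKernelForm_single_single,
    ← Finset.sum_sub_distrib, ← sub_mul, hkernel]
  simp [ite_mul, sq]

variable [LinearOrder Γ]

theorem IsPartitionFirstKind.exists_finsuppKernelForm_sub_eq_sq {K : Type*} [CommRing K]
    [Countable K] {f : Sym2 Γ → Fin 2} (hf : IsPartitionFirstKind f) {S : Set Γ}
    (hS : ¬ S.Countable) {z : Γ → Γ →₀ K} (hz : ∀ γ ∈ S, z γ γ ≠ 0) :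
    ∃ i ∈ S, ∃ j ∈ S, ∃ i' ∈ S, ∃ j' ∈ S,
      finsuppKernelForm (pairKernel K f) (z i) (z j) -
        finsuppKernelForm (pairKernel K f) (z i') (z j') = z i i ^ 2 := by
  set F := finsuppKernelForm (pairKernel K f)
  obtain ⟨J, hJS, hJ, R, n, r, k, c, a, ha, hdisj⟩ := exists_not_countable_isSplitting hS hz
  set w : Γ →₀ K := r.extendDomain
  set u : Γ → Γ →₀ K := fun γ => ∑ t, Finsupp.single (a γ t) (c t)
  obtain ⟨q, hq⟩ := exists_not_countable_setOf_of_forall_exists hJ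
    (P := fun γ q => (F w (u γ), F (u γ) w) = q) fun γ _ => ⟨_, rfl⟩
  set J' := {γ ∈ J | (F w (u γ), F (u γ) w) = q}
  have hexpand : ∀ i ∈ J', ∀ j ∈ J', F (z i) (z j) = F w w + q.1 + q.2 + F (u i) (u j) := by
    rintro i ⟨hi, rfl⟩ j ⟨hj, hqj⟩
    rw [(ha i hi).eq_add, (ha j hj).eq_add, ← congrArg Prod.fst hqj]
    simp only [map_add, LinearMap.add_apply]
    ring
  have hinj : Set.InjOn a J' := fun i hi j hj hij => by
    rw [← (ha i hi.1).apply_place, hij, (ha j hj.1).apply_place]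
  obtain ⟨_, ⟨i, hi, rfl⟩, _, ⟨j, hj, rfl⟩, _, ⟨i', hi', rfl⟩, _, ⟨j', hj', rfl⟩,
      hij, hij', hone, hzero, heq⟩ :=
    hf n (a '' J') (fun h => hq (Set.countable_of_injective_of_countable_image hinj h))
      (Set.forall_mem_image.2 fun γ hγ => (ha γ hγ.1).strictMono)
      (hinj.pairwise_image.2 fun γ hγ γ' hγ' => hdisj hγ.1 hγ'.1) k
  refine ⟨i, hJS hi.1, j, hJS hj.1, i', hJS hi'.1, j', hJS hj'.1, ?_⟩
  rw [hexpand i hi j hj, hexpand i' hi' j' hj', add_sub_add_left_eq_sub,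
    ← (ha i hi.1).coeff_place]
  exact finsuppKernelForm_pairKernel_sub (hdisj hi.1 hj.1 (ne_of_apply_ne a hij))
    (hdisj hi'.1 hj'.1 (ne_of_apply_ne a hij')) hone hzero heq c

theorem norm_orderedPairKernel_le_one (f : Sym2 Γ → Fin 2) (α β : Γ) :
    ‖orderedPairKernel f α β‖ ≤ 1 := by
  unfold orderedPairKernel
  split_ifs <;> simp

theorem orderedPairKernel_add_swap (f : Sym2 Γ → Fin 2) (α β : Γ) :
    orderedPairKernel f α β + orderedPairKernel f β α = pairKernel ℂ f α β := by
  unfold orderedPairKernel pairKernel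
  rw [Sym2.eq_swap (a := β)]
  grind

theorem Pf_term_eq_orderedPairKernel_mul (f : Sym2 Γ → Fin 2) (x : ell1 Γ) (p : Γ × Γ) :
    (if p.1 < p.2 ∧ f s(p.1, p.2) = 1 then x p.1 * x p.2 else 0) =
      orderedPairKernel f p.1 p.2 * (x p.1 * x p.2) := by
  rw [orderedPairKernel, ite_mul, one_mul, zero_mul]

/-- The polarization `(x, y) ↦ P_f(x + y) - P_f(x) - P_f(y)` of `P_f`; see `Pf_add`. -/
def pairForm (f : Sym2 Γ → Fin 2) : ell1 Γ →L[ℂ] ell1 Γ →L[ℂ] ℂ :=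
  ell1KernelForm (pairKernel ℂ f) (norm_pairKernel_le_one f)

theorem norm_pairForm_le_one (f : Sym2 Γ → Fin 2) : ‖pairForm f‖ ≤ 1 :=
  ContinuousLinearMap.opNorm_le_bound₂ _ zero_le_one (norm_ell1KernelForm_apply_le _)

theorem Pf_add (f : Sym2 Γ → Fin 2) (x y : ell1 Γ) :
    Pf f (x + y) = Pf f x + Pf f y + pairForm f x y := by
  set T := ell1KernelForm (orderedPairKernel f) (norm_orderedPairKernel_le_one f)
  have hdiag : ∀ x, Pf f x = T x x := fun x => tsum_congr (Pf_term_eq_orderedPairKernel_mul f x)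
  have hsymm : T x y + T y x = pairForm f x y :=
    ell1KernelForm_add_swap _ _ (orderedPairKernel_add_swap f) x y
  simp only [hdiag, ← hsymm, map_add, add_apply]
  ring

theorem pairForm_eq_zero_of_forall_Pf_eq_zero {f : Sym2 Γ → Fin 2} {Y : Submodule ℂ (ell1 Γ)}
    (hY : ∀ y ∈ Y, Pf f y = 0) {x y : ell1 Γ} (hx : x ∈ Y) (hy : y ∈ Y) :
    pairForm f x y = 0 := by
  simpa [hY x hx, hY y hy, hY _ (Y.add_mem hx hy)] using (Pf_add f x y).symm

theorem pairForm_finsuppToEll1 (f : Sym2 Γ → Fin 2) (K : Subring ℂ) (z w : Γ →₀ K) :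
    pairForm f (finsuppToEll1 K z) (finsuppToEll1 K w) =
      finsuppKernelForm (pairKernel K f) z w := by
  rw [← ell1KernelForm_finsuppToEll1 (C := 1)]
  · simp only [coe_pairKernel, pairForm]
  · simpa only [coe_pairKernel] using norm_pairKernel_le_one f

end PartitionForms

section ZeroSubspaces

theorem norm_apply_apply_le_of_norm_sub_le {𝕜 E F G : Type*} [NontriviallyNormedField 𝕜]
    [SeminormedAddCommGroup E] [SeminormedAddCommGroup F] [SeminormedAddCommGroup G]
    [NormedSpace 𝕜 E] [NormedSpace 𝕜 F] [NormedSpace 𝕜 G]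
    {B : E →L[𝕜] F →L[𝕜] G} (hB : ‖B‖ ≤ 1) {x x' : E} {y y' : F} {M δ : ℝ}
    (hx : ‖x‖ ≤ M) (hy : ‖y‖ ≤ M) (hxx' : ‖x' - x‖ ≤ δ) (hyy' : ‖y' - y‖ ≤ δ)
    (hzero : B x y = 0) : ‖B x' y'‖ ≤ δ * (2 * M + δ) := by
  have hexpand : B x' y' = B (x' - x) (y' - y) + B (x' - x) y + B x (y' - y) := by
    simp only [map_sub, sub_apply, hzero]
    abel
  calc ‖B x' y'‖
      ≤ ‖B (x' - x) (y' - y)‖ + ‖B (x' - x) y‖ + ‖B x (y' - y)‖ := hexpand ▸ norm_add₃_le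
    _ ≤ 1 * δ * δ + 1 * δ * M + 1 * M * δ := by
      gcongr <;> exact B.le_of_opNorm₂_le_of_le hB ‹_› ‹_›
    _ = δ * (2 * M + δ) := by ring

theorem exists_pos_lt_and_mul_lt (M : ℝ) {ε : ℝ} (hε : 0 < ε) :
    ∃ δ, 0 < δ ∧ δ < ε ∧ δ * (2 * M + δ) < ε := by
  have hcont : Continuous fun δ : ℝ => δ * (2 * M + δ) := by fun_prop
  have hsmall : ∀ᶠ δ in nhds 0, δ * (2 * M + δ) < ε :=
    (hcont.tendsto' 0 0 (by simp)).eventually_lt_const hε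
  have hlt : ∀ᶠ δ in nhdsWithin 0 (Set.Ioi 0), δ < ε ∧ δ * (2 * M + δ) < ε :=
    ((eventually_lt_nhds hε).and hsmall).filter_mono nhdsWithin_le_nhds
  have hpos : ∀ᶠ δ : ℝ in nhdsWithin 0 (Set.Ioi 0), 0 < δ := self_mem_nhdsWithin
  exact (hpos.and hlt).exists

variable {Γ : Type*}

theorem exists_not_countable_apply_self_eq_one {Y : Submodule ℂ (ell1 Γ)}
    (hY : ¬ {γ | ∃ y ∈ Y, y γ ≠ 0}.Countable) :
    ∃ (S : Set Γ) (M : ℝ) (y : Γ → ell1 Γ), ¬ S.Countable ∧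
      ∀ γ ∈ S, y γ ∈ Y ∧ y γ γ = 1 ∧ ‖y γ‖ ≤ M := by
  have hnormalize : ∀ γ ∈ {γ | ∃ y ∈ Y, y γ ≠ 0}, ∃ y ∈ Y, y γ = 1 := by
    rintro γ ⟨y, hy, hne⟩
    exact ⟨(y γ)⁻¹ • y, Y.smul_mem _ hy, by simp [hne]⟩
  choose! y hyY hy_one using hnormalize
  obtain ⟨M, hM⟩ := exists_not_countable_setOf_of_forall_exists hY
    (P := fun γ (M : ℕ) => ‖y γ‖ ≤ M) fun γ _ => exists_nat_ge _
  exact ⟨_, M, y, hM, fun γ hγ => ⟨hyY γ hγ.1, hy_one γ hγ.1, hγ.2⟩⟩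

theorem IsPartitionFirstKind.exists_pairForm_ne_zero [LinearOrder Γ] {f : Sym2 Γ → Fin 2}
    (hf : IsPartitionFirstKind f) {S : Set Γ} (hS : ¬ S.Countable) {y : Γ → ell1 Γ} {M : ℝ}
    (hy_one : ∀ γ ∈ S, y γ γ = 1) (hy_norm : ∀ γ ∈ S, ‖y γ‖ ≤ M) :
    ∃ i ∈ S, ∃ j ∈ S, pairForm f (y i) (y j) ≠ 0 := by
  by_contra! hzero
  obtain ⟨K, _, hK⟩ := exists_countable_dense_subring ℂ
  obtain ⟨δ, hδ, hδ_lt, hδ_small⟩ := exists_pos_lt_and_mul_lt M (ε := 1 / 8) (by norm_num)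
  choose z hz using fun γ => (denseRange_finsuppToEll1 hK).exists_dist_lt (y γ) hδ
  have hz_close : ∀ γ, ‖finsuppToEll1 K (z γ) - y γ‖ ≤ δ := fun γ =>
    (dist_eq_norm_sub' (y γ) _ ▸ hz γ).le
  have hz_diag : ∀ γ ∈ S, 1 / 2 ≤ ‖(z γ γ : ℂ)‖ := fun γ hγ => by
    have hcoord := (lp.norm_apply_le_norm one_ne_zero _ γ).trans (hz_close γ)
    rw [lp.coeFn_sub, Pi.sub_apply, finsuppToEll1_apply, hy_one γ hγ] at hcoord
    have := norm_sub_norm_le (1 : ℂ) (z γ γ)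
    rw [norm_one, norm_sub_rev] at this
    linarith
  have hsmall : ∀ i ∈ S, ∀ j ∈ S,
      ‖(finsuppKernelForm (pairKernel K f) (z i) (z j) : ℂ)‖ < 1 / 8 := fun i hi j hj => by
    rw [← pairForm_finsuppToEll1]
    exact (norm_apply_apply_le_of_norm_sub_le (norm_pairForm_le_one f) (hy_norm i hi)
      (hy_norm j hj) (hz_close i) (hz_close j) (hzero i hi j hj)).trans_lt hδ_small
  obtain ⟨i, hi, j, hj, i', hi', j', hj', hsq⟩ :=
    hf.exists_finsuppKernelForm_sub_eq_sq hS (z := z) fun γ hγ h => by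
      have := hz_diag γ hγ
      norm_num [h] at this
  have hlt : ‖(z i i : ℂ)‖ ^ 2 < 1 / 4 := by
    have := norm_sub_le (finsuppKernelForm (pairKernel K f) (z i) (z j) : ℂ)
      (finsuppKernelForm (pairKernel K f) (z i') (z j'))
    rw [← AddSubgroupClass.coe_sub, hsq, SubmonoidClass.coe_pow, norm_pow] at this
    linarith [hsmall i hi j hj, hsmall i' hi' j' hj']
  nlinarith [hz_diag i hi]

end ZeroSubspaces

theorem separable_of_zero_subspace_of_partition_first_kind_general
    {Γ : Type*} [LinearOrder Γ] (f : Sym2 Γ → Fin 2) (hf : IsPartitionFirstKind f) :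
    (∀ x : ell1 Γ,
      Summable fun p : Γ × Γ =>
        ‖if p.1 < p.2 ∧ f s(p.1, p.2) = 1 then x p.1 * x p.2 else 0‖) ∧
    ∀ Y : Submodule ℂ (ell1 Γ),
      (∀ y ∈ Y, Pf f y = 0) →
      TopologicalSpace.IsSeparable (Y : Set (ell1 Γ)) := by
  refine ⟨fun x => ?_, fun Y hY => isSeparable_of_countable_setOf_apply_ne_zero ?_⟩
  · simp only [Pf_term_eq_orderedPairKernel_mul]
    exact summable_norm_kernel_mul (norm_orderedPairKernel_le_one f) x x
  · by_contra huncountable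
    obtain ⟨S, M, y, hS, hy⟩ := exists_not_countable_apply_self_eq_one huncountable
    obtain ⟨i, hi, j, hj, hne⟩ := hf.exists_pairForm_ne_zero hS
      (fun γ hγ => (hy γ hγ).2.1) fun γ hγ => (hy γ hγ).2.2
    exact hne (pairForm_eq_zero_of_forall_Pf_eq_zero hY (hy i hi).1 (hy j hj).1)

/-- If `Γ` is an ordinal (a well-ordered type) and `f : [Γ]² → 2` is a partition of the first
kind, then the defining sum of `P_f` converges absolutely for every `x ∈ ℓ₁(Γ)`, and every
linear subspace `Y ⊆ ℓ₁(Γ)` with `P_f(y) = 0` for all `y ∈ Y` is separable. -/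
theorem separable_of_zero_subspace_of_partition_first_kind
    {Γ : Type*} [LinearOrder Γ] [WellFoundedLT Γ]
    (f : Sym2 Γ → Fin 2) (hf : IsPartitionFirstKind f) :
    (∀ x : ell1 Γ,
      Summable fun p : Γ × Γ =>
        ‖if p.1 < p.2 ∧ f s(p.1, p.2) = 1 then x p.1 * x p.2 else 0‖) ∧
    ∀ Y : Submodule ℂ (ell1 Γ),
      (∀ y ∈ Y, Pf f y = 0) →
      TopologicalSpace.IsSeparable (Y : Set (ell1 Γ)) :=
  separable_of_zero_subspace_of_partition_first_kind_general f hf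

end
end

section
/- Let Ω be an infinite set and let 𝒜 be an almost disjoint family of subsets of Ω such that no member of 𝒜 is covered by the union of finitely many other members of 𝒜 (in particular this holds whenever each A ∈ 𝒜 is infinite and distinct members of 𝒜 have finite intersection). Let ℬ = Ω ⊔ 𝒜 be the disjoint union, and define the continuous quadratic functional P : ℓ₁(ℬ) → ℂ by P(x) = Σ{ x_n x_A : n ∈ Ω, A ∈ 𝒜, n ∈ A } (this sum converges absolutely on ℓ₁(ℬ)). Then the closed subspace X = { x ∈ ℓ₁(ℬ) : x_A = 0 for all A ∈ 𝒜 }, a copy of ℓ₁(Ω), is a maximal zero subspace of P: P vanishes on X, and X is not properly contained in any linear subspace on which P vanishes. -/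
noncomputable section
open scoped Classical

/-- The quadratic functional `P(x) = Σ { x_n x_A : n ∈ Ω, A ∈ 𝒜, n ∈ A }` on
`ℓ₁(Ω ⊔ 𝒜)`. -/
def Pad {Ω : Type*} (𝒜 : Set (Set Ω)) (x : ell1 (Ω ⊕ ↥𝒜)) : ℂ :=
  ∑' q : Ω × ↥𝒜, if q.1 ∈ (q.2 : Set Ω) then x (Sum.inl q.1) * x (Sum.inr q.2) else 0

/-- The closed subspace `X = { x ∈ ℓ₁(Ω ⊔ 𝒜) : x_A = 0 for all A ∈ 𝒜 }`, a copy of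
`ℓ₁(Ω)` inside `ℓ₁(Ω ⊔ 𝒜)`. -/
def Xad {Ω : Type*} (𝒜 : Set (Set Ω)) : Submodule ℂ (ell1 (Ω ⊕ ↥𝒜)) where
  carrier := {x | ∀ A : ↥𝒜, x (Sum.inr A) = 0}
  add_mem' := by
    intro x y hx hy A
    simp [lp.coeFn_add x y, hx A, hy A]
  zero_mem' := by
    intro A
    simp [lp.coeFn_zero]
  smul_mem' := by
    intro c x hx A
    simp [lp.coeFn_smul c x, hx A]

/-!
Only the pairs `(n, A)` with `n ∈ A` contribute to `P`, so adding the basis vector `e_n`, `n ∈ Ω`,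
to `y` changes `P y` by `∑ {y_A : n ∈ A}`. If `y` lies in a zero subspace containing `X`, all these
sums vanish. Were `y_A ≠ 0` for some `A`, one could pick a finite set `F` of other members carrying
all the coordinates `y_B`, `B ≠ A`, up to a tail too small to cancel `y_A`. A point `n ∈ A` outside
`⋃ F` then has `∑ {y_B : n ∈ B} ≠ 0`.
-/

theorem eq_zero_of_forall_hasSum_ite_mem {Ω ι E : Type*} [AddCommGroup E] [TopologicalSpace E]
    [IsTopologicalAddGroup E] [T1Space E] {A : ι → Set Ω}
    (hA : ∀ i, ∀ F : Finset ι, i ∉ F → ¬ A i ⊆ ⋃ j ∈ F, A j) {v : ι → E} (hv : Summable v)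
    (hsum : ∀ n, HasSum (fun i => if n ∈ A i then v i else 0) 0) : v = 0 := by
  funext i
  by_contra hi
  obtain ⟨V, hV, hVsub⟩ := exists_nhds_half_neg (compl_singleton_mem_nhds (Ne.symm hi))
  obtain ⟨s, hs⟩ := hv.vanishing hV
  obtain ⟨n, hni, hn⟩ := Set.not_subset.mp (hA i (s.erase i) (Finset.notMem_erase i s))
  obtain ⟨t, ht, htV⟩ := ((Filter.eventually_ge_atTop (insert i s)).and
    ((hsum n).eventually_mem hV)).exists
  have hhead : ∑ j ∈ insert i s, (if n ∈ A j then v j else 0) = v i := by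
    rw [Finset.sum_eq_single_of_mem i (Finset.mem_insert_self i s), if_pos hni]
    intro j hj hji
    refine if_neg fun hnj => hn (Set.mem_biUnion (Finset.mem_erase.mpr ⟨hji, ?_⟩) hnj)
    exact Finset.mem_of_mem_insert_of_ne hj hji
  have htail : ∑ j ∈ t \ insert i s, (if n ∈ A j then v j else 0) ∈ V := by
    rw [← Finset.sum_filter]
    refine hs _ ((Finset.sdiff_disjoint.mono_right ?_).mono_left (Finset.filter_subset _ _))
    exact Finset.subset_insert i s
  refine hVsub _ htV _ htail ?_
  rw [← Finset.sum_sdiff ht, add_sub_cancel_left, hhead]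
  rfl

/-- The bilinear pairing `∑ {u_n v_i : n ∈ A i}` of families on `Ω` and `ι` along the incidence
relation of the sets `A i ⊆ Ω`; `Pad` pairs the two halves of a single vector, and separating them
gives the first-order change of `Pad`. The value is `0` when the sum does not converge. -/
def incidencePairing {Ω ι R : Type*} [NonUnitalNonAssocSemiring R] [TopologicalSpace R]
    (A : ι → Set Ω) (u : Ω → R) (v : ι → R) : R :=
  ∑' q : Ω × ι, if q.1 ∈ A q.2 then u q.1 * v q.2 else 0

section IncidencePairing

variable {Ω ι R : Type*}

theorem incidencePairing_zero_right [NonUnitalNonAssocSemiring R] [TopologicalSpace R]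
    (A : ι → Set Ω) (u : Ω → R) : incidencePairing A u 0 = 0 := by
  simp [incidencePairing]

theorem incidencePairing_single_one_left [NonAssocSemiring R] [TopologicalSpace R]
    (A : ι → Set Ω) (n : Ω) (v : ι → R) :
    incidencePairing A (Pi.single n 1) v = ∑' i, if n ∈ A i then v i else 0 := by
  rw [incidencePairing, ← (Prod.mk_right_injective n).tsum_eq]
  · simp
  · rintro ⟨m, i⟩ hq
    obtain rfl : m = n := by
      by_contra hmn
      simp [hmn] at hq
    exact ⟨i, rfl⟩

variable [NormedRing R]

theorem summable_norm_ite_mem_mul (A : ι → Set Ω) {u : Ω → R} {v : ι → R}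
    (hu : Summable fun n => ‖u n‖) (hv : Summable fun i => ‖v i‖) :
    Summable fun q : Ω × ι => ‖if q.1 ∈ A q.2 then u q.1 * v q.2 else 0‖ := by
  refine (hu.mul_norm hv).of_nonneg_of_le (fun _ => norm_nonneg _) fun q => ?_
  split_ifs <;> simp

variable [CompleteSpace R]

theorem incidencePairing_add_left (A : ι → Set Ω) {u u' : Ω → R} {v : ι → R}
    (hu : Summable fun n => ‖u n‖) (hu' : Summable fun n => ‖u' n‖)
    (hv : Summable fun i => ‖v i‖) :
    incidencePairing A (u + u') v = incidencePairing A u v + incidencePairing A u' v := by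
  simp only [incidencePairing]
  rw [← (summable_norm_ite_mem_mul A hu hv).of_norm.tsum_add
    (summable_norm_ite_mem_mul A hu' hv).of_norm]
  refine tsum_congr fun q => ?_
  split_ifs <;> simp [add_mul]

theorem eq_zero_of_forall_incidencePairing_single_one_left {A : ι → Set Ω}
    (hA : ∀ i, ∀ F : Finset ι, i ∉ F → ¬ A i ⊆ ⋃ j ∈ F, A j) {v : ι → R}
    (hv : Summable fun i => ‖v i‖) (h : ∀ n, incidencePairing A (Pi.single n 1) v = 0) :
    v = 0 := by
  refine eq_zero_of_forall_hasSum_ite_mem hA hv.of_norm fun n => ?_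
  have htsum := (incidencePairing_single_one_left A n v).symm.trans (h n)
  exact (hv.of_norm.indicator {i | n ∈ A i}).hasSum_iff.mpr htsum

end IncidencePairing

section Ell1

variable {Γ α β : Type*}

theorem summable_norm_ell1 (x : ell1 Γ) : Summable fun γ => ‖x γ‖ := by
  simpa using (lp.memℓp x).summable (by simp)

theorem summable_norm_comp_inl (x : ell1 (α ⊕ β)) : Summable fun a => ‖x (Sum.inl a)‖ :=
  (summable_norm_ell1 x).comp_injective Sum.inl_injective

theorem summable_norm_comp_inr (x : ell1 (α ⊕ β)) : Summable fun b => ‖x (Sum.inr b)‖ :=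
  (summable_norm_ell1 x).comp_injective Sum.inr_injective

theorem single_inl_comp_inl [DecidableEq α] [DecidableEq β] (a : α) :
    ⇑(lp.single 1 (Sum.inl a) 1 : ell1 (α ⊕ β)) ∘ Sum.inl = Pi.single a 1 := by
  funext c
  simp [lp.single_apply, Pi.single_apply]

end Ell1

section MaximalZeroSubspace

variable {Ω : Type*} {𝒜 : Set (Set Ω)}

theorem Pad_eq_incidencePairing (x : ell1 (Ω ⊕ ↥𝒜)) :
    Pad 𝒜 x = incidencePairing ((↑) : ↥𝒜 → Set Ω) (x ∘ Sum.inl) (x ∘ Sum.inr) :=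
  rfl

theorem mem_Xad_iff {x : ell1 (Ω ⊕ ↥𝒜)} : x ∈ Xad 𝒜 ↔ ⇑x ∘ Sum.inr = 0 :=
  funext_iff.symm

theorem Pad_eq_zero_of_mem_Xad {x : ell1 (Ω ⊕ ↥𝒜)} (hx : x ∈ Xad 𝒜) : Pad 𝒜 x = 0 := by
  rw [Pad_eq_incidencePairing, mem_Xad_iff.mp hx, incidencePairing_zero_right]

theorem Pad_add_of_mem_Xad (y : ell1 (Ω ⊕ ↥𝒜)) {z : ell1 (Ω ⊕ ↥𝒜)} (hz : z ∈ Xad 𝒜) :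
    Pad 𝒜 (y + z) =
      Pad 𝒜 y + incidencePairing ((↑) : ↥𝒜 → Set Ω) (z ∘ Sum.inl) (y ∘ Sum.inr) := by
  have hinr : ⇑(y + z) ∘ Sum.inr = y ∘ Sum.inr := by
    rw [lp.coeFn_add, Pi.add_comp, mem_Xad_iff.mp hz, add_zero]
  rw [Pad_eq_incidencePairing, hinr, lp.coeFn_add, Pi.add_comp]
  exact incidencePairing_add_left _ (summable_norm_comp_inl y) (summable_norm_comp_inl z)
    (summable_norm_comp_inr y)

theorem single_inl_mem_Xad (n : Ω) :
    (lp.single 1 (Sum.inl n) 1 : ell1 (Ω ⊕ ↥𝒜)) ∈ Xad 𝒜 := by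
  intro A
  simp [lp.single_apply]

theorem not_subset_biUnion_coe
    (hcov : ∀ A ∈ 𝒜, ∀ F : Finset (Set Ω), ↑F ⊆ 𝒜 \ {A} → ¬ A ⊆ ⋃₀ (↑F : Set (Set Ω)))
    (A : ↥𝒜) (F : Finset ↥𝒜) (hAF : A ∉ F) : ¬ (A : Set Ω) ⊆ ⋃ B ∈ F, (B : Set Ω) := by
  have hF : (↑(F.image Subtype.val) : Set (Set Ω)) ⊆ 𝒜 \ {↑A} := by
    rw [Finset.coe_image]
    rintro _ ⟨B, hB, rfl⟩
    exact ⟨B.2, fun hBA => hAF (Subtype.ext hBA ▸ hB)⟩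
  simpa [Set.sUnion_image] using hcov A A.2 _ hF

theorem le_Xad_of_forall_Pad_eq_zero
    (hcov : ∀ A ∈ 𝒜, ∀ F : Finset (Set Ω), ↑F ⊆ 𝒜 \ {A} → ¬ A ⊆ ⋃₀ (↑F : Set (Set Ω)))
    {Y : Submodule ℂ (ell1 (Ω ⊕ ↥𝒜))} (hY : ∀ y ∈ Y, Pad 𝒜 y = 0) (hXY : Xad 𝒜 ≤ Y) :
    Y ≤ Xad 𝒜 := by
  intro y hy
  refine mem_Xad_iff.mpr (eq_zero_of_forall_incidencePairing_single_one_left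
    (not_subset_biUnion_coe hcov) (summable_norm_comp_inr y) fun n => ?_)
  have hshift := Pad_add_of_mem_Xad y (single_inl_mem_Xad n)
  rwa [hY _ (Y.add_mem hy (hXY (single_inl_mem_Xad n))), hY y hy, zero_add, single_inl_comp_inl,
    eq_comm] at hshift

end MaximalZeroSubspace

theorem ell1_Omega_is_maximal_zero_subspace_general
    {Ω : Type*} (𝒜 : Set (Set Ω))
    (hcov : ∀ A ∈ 𝒜, ∀ F : Finset (Set Ω), ↑F ⊆ 𝒜 \ {A} → ¬ A ⊆ ⋃₀ (↑F : Set (Set Ω))) :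
    (∀ x : ell1 (Ω ⊕ ↥𝒜),
      Summable fun q : Ω × ↥𝒜 =>
        ‖if q.1 ∈ (q.2 : Set Ω) then x (Sum.inl q.1) * x (Sum.inr q.2) else 0‖) ∧
    (∀ x ∈ Xad 𝒜, Pad 𝒜 x = 0) ∧
    ∀ Y : Submodule ℂ (ell1 (Ω ⊕ ↥𝒜)),
      (∀ y ∈ Y, Pad 𝒜 y = 0) → Xad 𝒜 ≤ Y → Y = Xad 𝒜 := by
  refine ⟨fun x => ?_, fun x hx => Pad_eq_zero_of_mem_Xad hx, fun Y hY hXY => ?_⟩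
  · simpa only [Function.comp_apply] using summable_norm_ite_mem_mul (u := x ∘ Sum.inl)
      (v := x ∘ Sum.inr) (↑) (summable_norm_comp_inl x) (summable_norm_comp_inr x)
  · exact (le_Xad_of_forall_Pad_eq_zero hcov hY hXY).antisymm hXY

/-- Let `Ω` be an infinite set and `𝒜` an almost disjoint family of subsets of `Ω`
(`|A ∩ A'| < |Ω|` for distinct `A, A' ∈ 𝒜`) such that no member of `𝒜` is covered by the
union of finitely many other members. Then the sum defining the quadratic functional
`P(x) = Σ { x_n x_A : n ∈ Ω, A ∈ 𝒜, n ∈ A }` on `ℓ₁(Ω ⊔ 𝒜)` converges absolutely, `P`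
vanishes on the subspace `X = { x : x_A = 0 for all A ∈ 𝒜 }` (a copy of `ℓ₁(Ω)`), and `X`
is a maximal zero subspace of `P`. -/
theorem ell1_Omega_is_maximal_zero_subspace
    {Ω : Type*} [Infinite Ω] (𝒜 : Set (Set Ω))
    (had : ∀ A ∈ 𝒜, ∀ A' ∈ 𝒜, A ≠ A' →
      Cardinal.mk ↥(A ∩ A') < Cardinal.mk Ω)
    (hcov : ∀ A ∈ 𝒜, ∀ F : Finset (Set Ω), ↑F ⊆ 𝒜 \ {A} → ¬ A ⊆ ⋃₀ (↑F : Set (Set Ω))) :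
    (∀ x : ell1 (Ω ⊕ ↥𝒜),
      Summable fun q : Ω × ↥𝒜 =>
        ‖if q.1 ∈ (q.2 : Set Ω) then x (Sum.inl q.1) * x (Sum.inr q.2) else 0‖) ∧
    (∀ x ∈ Xad 𝒜, Pad 𝒜 x = 0) ∧
    ∀ Y : Submodule ℂ (ell1 (Ω ⊕ ↥𝒜)),
      (∀ y ∈ Y, Pad 𝒜 y = 0) → Xad 𝒜 ≤ Y → Y = Xad 𝒜 := by
  exact ell1_Omega_is_maximal_zero_subspace_general 𝒜 hcov

end
end

section
/- There exists a continuous quadratic functional P : ℓ₁(𝔠) → ℂ (over the complex field, 𝔠 = 2^{ℵ₀} being the cardinality of the continuum) which has a separable maximal zero subspace and also a maximal zero subspace of density 𝔠. -/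
noncomputable section

/-- The density character of a topological space: the smallest cardinality of a dense
subset. -/
def densityChar (α : Type u) [TopologicalSpace α] : Cardinal.{u} :=
  sInf {c : Cardinal.{u} | ∃ s : Set α, Dense s ∧ Cardinal.mk s = c}

/-- `Y` is a maximal zero subspace of `P`: `P` vanishes on `Y`, and `Y` is maximal with
respect to inclusion among the subspaces on which `P` vanishes. -/
def IsMaximalZeroSubspace {X : Type*} [NormedAddCommGroup X] [Module ℂ X]
    (P : X → ℂ) (Y : Submodule ℂ X) : Prop :=
  (∀ y ∈ Y, P y = 0) ∧
  ∀ Z : Submodule ℂ X, (∀ z ∈ Z, P z = 0) → Y ≤ Z → Z = Y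

/-!
Give the index set a second countable `T₁` topology, and let `B` be the adjacency form
`∑_{v ~ w} x_v y_w` of the bipartite graph joining each set of a countable basis to the points it
contains. Independent sets of vertices span zero subspaces, so `ℓ₁` of the basis and `ℓ₁` of the
points are both zero subspaces.

The first one is separable, and it is already maximal: a family `z` orthogonal to it has vanishing
sum over every basic open set, and shrinking these sets to a point `t` gives `z_t = 0`. The second
one contains as many vectors at mutual distance `≥ 1` as there are points, so any maximal zero
subspace containing it has full density.
-/

open Cardinal TopologicalSpace Topology
open scoped Pointwise

universe u

section Density

variable {X : Type u}

lemma densityChar_le_mk [TopologicalSpace X] {s : Set X} (hs : Dense s) : densityChar X ≤ #s :=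
  csInf_le' ⟨s, hs, rfl⟩

lemma exists_dense_mk_eq_densityChar (X : Type u) [TopologicalSpace X] :
    ∃ s : Set X, Dense s ∧ #s = densityChar X :=
  csInf_mem (s := {c | ∃ s : Set X, Dense s ∧ #s = c}) ⟨_, Set.univ, dense_univ, rfl⟩

lemma mk_le_densityChar_of_pairwise_le_dist [PseudoMetricSpace X] {ι : Type u} {f : ι → X}
    {ε : ℝ} (hε : 0 < ε) (hf : Pairwise fun i j => ε ≤ dist (f i) (f j)) :
    #ι ≤ densityChar X := by
  obtain ⟨s, hs, hcard⟩ := exists_dense_mk_eq_densityChar X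
  choose g hgs hg using fun i => hs.exists_dist_lt (f i) (half_pos hε)
  have hinj : Function.Injective fun i => (⟨g i, hgs i⟩ : s) := by
    intro i j hij
    have hgij : g i = g j := congrArg Subtype.val hij
    by_contra hne
    refine (hf hne).not_gt ?_
    calc dist (f i) (f j) ≤ dist (f i) (g i) + dist (f j) (g i) := dist_triangle_right _ _ _
      _ < ε / 2 + ε / 2 := add_lt_add (hg i) (hgij ▸ hg j)
      _ = ε := add_halves ε
  exact hcard ▸ mk_le_of_injective hinj

lemma densityChar_coe_le [PseudoMetricSpace X] (Y : Set X) :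
    densityChar Y ≤ max ℵ₀ (densityChar X) := by
  obtain ⟨s, hs, hcard⟩ := exists_dense_mk_eq_densityChar X
  let N : Set (s × ℕ) := {p | ∃ y : Y, dist (p.1 : X) y < 1 / (p.2 + 1)}
  choose f hf using fun p : N => p.2
  have hdense : Dense (Set.range f) := by
    refine Metric.dense_iff.2 fun y ε hε => ?_
    obtain ⟨n, hn⟩ := exists_nat_one_div_lt (half_pos hε)
    obtain ⟨x, hxs, hx⟩ := hs.exists_dist_lt (y : X) (Nat.one_div_pos_of_nat (n := n) (α := ℝ))
    let p : N := ⟨(⟨x, hxs⟩, n), y, by rwa [dist_comm]⟩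
    have hfp : dist x (f p) < 1 / (n + 1) := hf p
    refine ⟨f p, ?_, Set.mem_range_self _⟩
    rw [Metric.mem_ball', Subtype.dist_eq]
    linarith [dist_triangle (y : X) x (f p)]
  calc densityChar Y ≤ #(Set.range f) := densityChar_le_mk hdense
    _ ≤ #N := mk_range_le
    _ ≤ #(s × ℕ) := mk_set_le N
    _ = #s * ℵ₀ := by simp
    _ ≤ max ℵ₀ (densityChar X) := by
      rw [hcard, max_comm]
      exact mul_le_max_of_aleph0_le_right le_rfl

lemma mk_addSubmonoid_closure_le {M : Type u} [AddMonoid M] (s : Set M) :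
    #(AddSubmonoid.closure s) ≤ max ℵ₀ #s := by
  have hrange : (AddSubmonoid.closure s : Set M) =
      Set.range (FreeAddMonoid.lift ((↑) : s → M)) := by
    rw [AddSubmonoid.closure_eq_mrange, AddMonoidHom.coe_mrange]
  calc #(AddSubmonoid.closure s) = #(Set.range (FreeAddMonoid.lift ((↑) : s → M))) :=
        congrArg (fun t : Set M => #t) hrange
    _ ≤ #(List s) := mk_range_le
    _ ≤ max ℵ₀ #s := mk_list_le_max s

lemma densityChar_le_of_dense_span {R : Type*} {M : Type u} [Semiring R] [TopologicalSpace R]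
    [SeparableSpace R] [AddCommMonoid M] [Module R M] [TopologicalSpace M] [ContinuousAdd M]
    [ContinuousSMul R M] {s : Set M} (hs : Dense (Submodule.span R s : Set M)) :
    densityChar M ≤ max ℵ₀ #s := by
  let t : Set M := Set.range fun p : ℕ × s => denseSeq R p.1 • (p.2 : M)
  have hsmul : (Set.univ : Set R) • s ⊆ ((AddSubmonoid.closure t).topologicalClosure : Set M) := by
    rintro _ ⟨c, -, x, hx, rfl⟩
    refine map_mem_closure (f := fun c : R => c • x) (by fun_prop) (denseRange_denseSeq R c) ?_
    rintro _ ⟨n, rfl⟩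
    exact AddSubmonoid.subset_closure ⟨(n, ⟨x, hx⟩), rfl⟩
  have hspan : (Submodule.span R s).toAddSubmonoid ≤
      (AddSubmonoid.closure t).topologicalClosure := by
    rw [Submodule.span_eq_closure]
    exact AddSubmonoid.closure_le.2 hsmul
  have hdense : Dense (AddSubmonoid.closure t : Set M) := dense_closure.1 (hs.mono hspan)
  have ht : #t ≤ max ℵ₀ #s :=
    calc #t ≤ #(ℕ × s) := mk_range_le
      _ = ℵ₀ * #s := by simp
      _ ≤ max ℵ₀ #s := mul_le_max_of_aleph0_le_left le_rfl
  calc densityChar M ≤ #(AddSubmonoid.closure t) := densityChar_le_mk hdense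
    _ ≤ max ℵ₀ #t := mk_addSubmonoid_closure_le t
    _ ≤ max ℵ₀ #s := max_le (le_max_left _ _) ht

end Density

section ZeroSubspace

variable {X : Type*} [NormedAddCommGroup X]

lemma exists_le_isMaximalZeroSubspace [Module ℂ X] {P : X → ℂ} {W : Submodule ℂ X}
    (hW : ∀ w ∈ W, P w = 0) : ∃ Y, W ≤ Y ∧ IsMaximalZeroSubspace P Y := by
  obtain ⟨Y, hWY, hY⟩ := zorn_le_nonempty₀ {Z : Submodule ℂ X | ∀ z ∈ Z, P z = 0}
    (fun c hc hchain Z₀ hZ₀ => ⟨sSup c, fun z hz => by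
      obtain ⟨Z, hZc, hzZ⟩ := (Submodule.mem_sSup_of_directed ⟨Z₀, hZ₀⟩ hchain.directedOn).1 hz
      exact hc hZc z hzZ, fun _ => le_sSup⟩) W hW
  exact ⟨Y, hWY, hY.prop, fun Z hZ hYZ => (hY.eq_of_le hZ hYZ).symm⟩

lemma apply_eq_zero_of_forall_apply_self_eq_zero [NormedSpace ℂ X] {B : X →L[ℂ] X →L[ℂ] ℂ}
    (hB : ∀ x y, B x y = B y x) {Z : Submodule ℂ X} (hZ : ∀ z ∈ Z, B z z = 0) {x y : X}
    (hx : x ∈ Z) (hy : y ∈ Z) : B x y = 0 := by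
  have hpolar : B (x + y) (x + y) = B x x + 2 * B x y + B y y := by
    simp only [map_add, add_apply, hB y x]
    ring
  rw [hZ x hx, hZ y hy, hZ (x + y) (Z.add_mem hx hy)] at hpolar
  simpa using hpolar

lemma isMaximalZeroSubspace_of_forall_mem [NormedSpace ℂ X] {B : X →L[ℂ] X →L[ℂ] ℂ}
    (hB : ∀ x y, B x y = B y x) {Y : Submodule ℂ X} (hY : ∀ y ∈ Y, B y y = 0)
    (hperp : ∀ z, (∀ y ∈ Y, B y z = 0) → z ∈ Y) :
    IsMaximalZeroSubspace (fun x => B x x) Y :=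
  ⟨hY, fun _ hZ hYZ => le_antisymm (fun z hz => hperp z fun _ hy =>
    apply_eq_zero_of_forall_apply_self_eq_zero hB hZ (hYZ hy) hz) hYZ⟩

end ZeroSubspace

section Ell1

variable {Γ : Type*}

section Lift

variable {E : Type*} [NormedAddCommGroup E] [NormedSpace ℂ E] [CompleteSpace E]

/-- The universal property of `ℓ₁(Γ)`: a bounded family `f` in a Banach space extends to the
continuous linear map `x ↦ ∑ x_γ f_γ`. -/
def ell1Lift (f : Γ → E) {K : ℝ} (hK : 0 ≤ K) (hf : ∀ γ, ‖f γ‖ ≤ K) : ell1 Γ →L[ℂ] E :=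
  lp.tsumCLM ℂ Γ E ∘L
    lp.mapCLM 1 (fun γ => ContinuousLinearMap.toSpanSingleton ℂ (f γ)) hK (by simpa using hf)

variable {f : Γ → E} {K : ℝ} (hK : 0 ≤ K) (hf : ∀ γ, ‖f γ‖ ≤ K)

lemma ell1Lift_apply (x : ell1 Γ) : ell1Lift f hK hf x = ∑' γ, x γ • f γ := rfl

lemma ell1Lift_single [DecidableEq Γ] (γ : Γ) (c : ℂ) :
    ell1Lift f hK hf (lp.single 1 γ c) = c • f γ := by
  rw [ell1Lift_apply, tsum_eq_single γ fun γ' hγ' => by simp [hγ']]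
  simp

lemma norm_ell1Lift_le : ‖ell1Lift f hK hf‖ ≤ K :=
  calc ‖ell1Lift f hK hf‖ ≤ 1 * K :=
        (ContinuousLinearMap.opNorm_comp_le _ _).trans
          (mul_le_mul lp.norm_tsumCLM_le (lp.norm_mapCLM_le ..) (norm_nonneg _) zero_le_one)
    _ = K := one_mul K

end Lift

/-- The closed subspace of `ℓ₁(Γ)` of families vanishing outside `A`, a copy of `ℓ₁(A)`. -/
def supportedOn (A : Set Γ) : Submodule ℂ (ell1 Γ) where
  carrier := {x | ∀ γ ∉ A, x γ = 0}
  add_mem' hx hy γ hγ := by simp [hx γ hγ, hy γ hγ]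
  zero_mem' _ _ := rfl
  smul_mem' c x hx γ hγ := by simp [hx γ hγ]

lemma single_mem_supportedOn [DecidableEq Γ] {A : Set Γ} {γ : Γ} (hγ : γ ∈ A) (c : ℂ) :
    (lp.single 1 γ c : ell1 Γ) ∈ supportedOn A :=
  fun _ hγ' => lp.single_apply_ne (E := fun _ => ℂ) 1 γ c (ne_of_mem_of_not_mem hγ hγ').symm

lemma supportedOn_le_topologicalClosure_span [DecidableEq Γ] (A : Set Γ) :
    supportedOn A ≤ (Submodule.span ℂ
      ((fun γ => (lp.single 1 γ (1 : ℂ) : ell1 Γ)) '' A)).topologicalClosure := by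
  intro x hx
  refine mem_closure_of_tendsto (lp.hasSum_single ENNReal.one_ne_top x)
    (.of_forall fun s => Submodule.sum_mem _ fun γ _ => ?_)
  by_cases hγ : γ ∈ A
  · have hsmul : (lp.single 1 γ (x γ) : ell1 Γ) = x γ • lp.single 1 γ (1 : ℂ) := by
      rw [← lp.single_smul, smul_eq_mul, mul_one]
    exact hsmul ▸ Submodule.smul_mem _ _ (Submodule.subset_span ⟨γ, hγ, rfl⟩)
  · simp [hx γ hγ]

lemma isSeparable_supportedOn {A : Set Γ} (hA : A.Countable) :
    IsSeparable (supportedOn A : Set (ell1 Γ)) := by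
  classical
  exact (hA.image _).isSeparable.span.closure.mono (supportedOn_le_topologicalClosure_span A)

lemma densityChar_ell1_le (Γ : Type u) : densityChar (ell1 Γ) ≤ max ℵ₀ #Γ := by
  classical
  have hdense : Dense (Submodule.span ℂ
      ((fun γ => (lp.single 1 γ (1 : ℂ) : ell1 Γ)) '' Set.univ) : Set (ell1 Γ)) := fun _ =>
    supportedOn_le_topologicalClosure_span Set.univ fun _ hγ => (hγ trivial).elim
  calc densityChar (ell1 Γ) ≤ max ℵ₀ _ := densityChar_le_of_dense_span hdense
    _ ≤ max ℵ₀ #Γ := max_le_max_left _ (mk_image_le.trans mk_univ.le)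

lemma one_le_dist_single [DecidableEq Γ] {γ δ : Γ} (h : γ ≠ δ) :
    1 ≤ dist (lp.single 1 γ (1 : ℂ) : ell1 Γ) (lp.single 1 δ (1 : ℂ)) := by
  let d : ell1 Γ := lp.single 1 γ (1 : ℂ) - lp.single 1 δ (1 : ℂ)
  have hd : d γ = 1 := by simp [d, h]
  calc (1 : ℝ) = ‖d γ‖ := by rw [hd, norm_one]
    _ ≤ ‖d‖ := lp.norm_apply_le_norm one_ne_zero d γ
    _ = _ := (dist_eq_norm _ _).symm

lemma mk_le_densityChar_of_supportedOn_le {Γ : Type u} {A : Set Γ} {Y : Submodule ℂ (ell1 Γ)}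
    (hAY : supportedOn A ≤ Y) : #A ≤ densityChar Y := by
  classical
  exact mk_le_densityChar_of_pairwise_le_dist one_pos
    (f := fun γ : A => (⟨lp.single 1 γ (1 : ℂ), hAY (single_mem_supportedOn γ.2 1)⟩ : Y))
    fun _ _ hne => one_le_dist_single (Subtype.coe_ne_coe.2 hne)

end Ell1

lemma eq_zero_of_forall_tsum_eq_zero {α E : Type*} [AddCommGroup E] [UniformSpace E]
    [IsUniformAddGroup E] [CompleteSpace E] [T2Space E] {f : α → E} (hf : Summable f) {a : α}
    {𝒮 : Set (Set α)} (hsum : ∀ S ∈ 𝒮, ∑' b : S, f b = 0)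
    (h𝒮 : ∀ F : Set α, F.Finite → a ∉ F → ∃ S ∈ 𝒮, a ∈ S ∧ Disjoint S F) : f a = 0 := by
  by_contra ha
  have hnhds : {-f a}ᶜ ∈ 𝓝 (0 : E) := isOpen_compl_singleton.mem_nhds (by simpa [eq_comm] using ha)
  obtain ⟨F, hF⟩ := hf.tsum_vanishing hnhds
  obtain ⟨S, hS, haS, hSF⟩ := h𝒮 (F \ {a}) F.finite_toSet.sdiff (by simp)
  have hsplit : f a + ∑' b : (S \ {a} : Set α), f b = 0 := by
    rw [← hsum S hS, ← tsum_singleton a f, ← Summable.tsum_union_disjoint Set.disjoint_sdiff_right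
      (hf.subtype _) (hf.subtype _), Set.union_sdiff_cancel (Set.singleton_subset_iff.2 haS)]
  exact hF _ (disjoint_sdiff_comm.2 hSF) (eq_neg_of_add_eq_zero_right hsplit)

section AdjacencyForm

variable {V : Type*} (G : SimpleGraph V)

/-- The summation functional `x ↦ ∑_{v ∈ S} x_v` on `ℓ₁(V)`. -/
def sumOn (S : Set V) : ell1 V →L[ℂ] ℂ :=
  ell1Lift (S.indicator 1) zero_le_one fun v =>
    (norm_indicator_le_norm_self _ _).trans (by simp)

lemma sumOn_apply (S : Set V) (x : ell1 V) : sumOn S x = ∑' v : S, x v := by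
  rw [tsum_subtype S x]
  exact tsum_congr fun v => by by_cases hv : v ∈ S <;> simp [hv]

lemma norm_sumOn_le (S : Set V) : ‖sumOn S‖ ≤ 1 := norm_ell1Lift_le ..

/-- The bilinear form `∑ x_v y_w` on `ℓ₁(V)`, the sum being over all ordered pairs of adjacent
vertices `v`, `w`; its matrix is the adjacency matrix of `G`. -/
def adjacencyForm : ell1 V →L[ℂ] ell1 V →L[ℂ] ℂ :=
  ell1Lift (fun v => sumOn (G.neighborSet v)) zero_le_one fun _ => norm_sumOn_le _

lemma adjacencyForm_single [DecidableEq V] (v : V) (c : ℂ) (y : ell1 V) :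
    adjacencyForm G (lp.single 1 v c) y = c * ∑' w : G.neighborSet v, y w := by
  rw [adjacencyForm, ell1Lift_single, smul_apply, sumOn_apply, smul_eq_mul]

lemma adjacencyForm_apply (x y : ell1 V) :
    adjacencyForm G x y = ∑' v, x v * ∑' w : G.neighborSet v, y w := by
  classical
  have hsum := (lp.hasSum_single ENNReal.one_ne_top x).mapL ((adjacencyForm G).flip y)
  simpa only [ContinuousLinearMap.flip_apply, adjacencyForm_single] using hsum.tsum_eq.symm

lemma adjacencyForm_comm (x y : ell1 V) : adjacencyForm G x y = adjacencyForm G y x := by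
  classical
  suffices h : (adjacencyForm G).flip = adjacencyForm G from
    DFunLike.congr_fun (DFunLike.congr_fun h y) x
  refine lp.ext_continuousLinearMap ENNReal.one_ne_top fun v => ContinuousLinearMap.ext_ring <|
    lp.ext_continuousLinearMap ENNReal.one_ne_top fun w => ContinuousLinearMap.ext_ring ?_
  simp [adjacencyForm, sumOn, ell1Lift_single, Set.indicator_apply, G.adj_comm v w]

variable {G} {A : Set V}

lemma adjacencyForm_self_eq_zero (hA : G.IsIndepSet A) {x : ell1 V} (hx : x ∈ supportedOn A) :
    adjacencyForm G x x = 0 := by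
  rw [adjacencyForm_apply, ← tsum_zero]
  congr 1 with v
  by_cases hv : v ∈ A
  · have hnbr (w : G.neighborSet v) : x w = 0 := hx w fun hw => hA hv hw w.2.ne w.2
    simp [hnbr]
  · simp [hx v hv]

lemma isIndepSet_preimage_comap {W : Type*} {f : W → V} (hf : Function.Injective f)
    (hA : G.IsIndepSet A) : (G.comap f).IsIndepSet (f ⁻¹' A) :=
  fun _ hv _ hw hne => hA hv hw (hf.ne hne)

variable (G A) in
/-- Each vertex outside `A` can be told apart from finitely many others by its adjacency to some
vertex of `A`. -/
def IsolatesCompl : Prop :=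
  ∀ v ∉ A, ∀ F : Set V, F.Finite → v ∉ F → ∃ a ∈ A, G.Adj a v ∧ Disjoint (G.neighborSet a) F

lemma IsolatesCompl.comap {W : Type*} (e : W ≃ V) (h : IsolatesCompl G A) :
    IsolatesCompl (G.comap e) (e ⁻¹' A) := by
  intro v hv F hF hvF
  obtain ⟨a, ha, hav, haF⟩ :=
    h (e v) hv (e '' F) (hF.image e) (e.injective.mem_set_image.not.2 hvF)
  refine ⟨e.symm a, by simpa using ha, by simpa using hav, Set.disjoint_left.2 fun w hw hwF => ?_⟩
  exact Set.disjoint_left.1 haF (by simpa using hw) (Set.mem_image_of_mem e hwF)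

lemma isMaximalZeroSubspace_supportedOn (hA : G.IsIndepSet A) (hiso : IsolatesCompl G A) :
    IsMaximalZeroSubspace (fun x => adjacencyForm G x x) (supportedOn A) := by
  classical
  refine isMaximalZeroSubspace_of_forall_mem (adjacencyForm_comm G)
    (fun x => adjacencyForm_self_eq_zero hA) fun z hz v hv => ?_
  refine eq_zero_of_forall_tsum_eq_zero (lp.memℓp z).summable_of_one
    (𝒮 := G.neighborSet '' A) ?_ fun F hF hvF => ?_
  · rintro _ ⟨a, ha, rfl⟩
    simpa only [adjacencyForm_single, one_mul] using hz _ (single_mem_supportedOn ha 1)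
  · obtain ⟨a, ha, hav, haF⟩ := hiso v hv F hF hvF
    exact ⟨_, ⟨a, ha, rfl⟩, hav, haF⟩

end AdjacencyForm

section IncidenceGraph

/-- The bipartite graph joining each set of the family `𝒰` to its elements. -/
def incidenceGraph {T : Type*} (𝒰 : Set (Set T)) : SimpleGraph (𝒰 ⊕ T) where
  Adj
    | .inl U, .inr t => t ∈ U.1
    | .inr t, .inl U => t ∈ U.1
    | _, _ => False
  symm := ⟨by rintro (_ | _) (_ | _) <;> exact id⟩
  loopless := ⟨by rintro (_ | _) <;> exact id⟩

lemma isIndepSet_incidenceGraph_range_inl {T : Type*} (𝒰 : Set (Set T)) :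
    (incidenceGraph 𝒰).IsIndepSet (Set.range Sum.inl) := by
  rintro _ ⟨U, rfl⟩ _ ⟨U', rfl⟩ -
  exact id

lemma isIndepSet_incidenceGraph_range_inr {T : Type*} (𝒰 : Set (Set T)) :
    (incidenceGraph 𝒰).IsIndepSet (Set.range Sum.inr) := by
  rintro _ ⟨t, rfl⟩ _ ⟨t', rfl⟩ -
  exact id

lemma isolatesCompl_incidenceGraph {T : Type*} [TopologicalSpace T] [T1Space T]
    {𝒰 : Set (Set T)} (h𝒰 : IsTopologicalBasis 𝒰) :
    IsolatesCompl (incidenceGraph 𝒰) (Set.range Sum.inl) := by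
  rintro (U | t) ht F hF htF
  · exact (ht ⟨U, rfl⟩).elim
  have hopen : IsOpen (Sum.inr ⁻¹' F : Set T)ᶜ :=
    (hF.preimage Sum.inr_injective.injOn).isClosed.isOpen_compl
  obtain ⟨U, hU, htU, hUF⟩ := h𝒰.exists_subset_of_mem_open (a := t) htF hopen
  refine ⟨.inl ⟨U, hU⟩, ⟨_, rfl⟩, htU, Set.disjoint_left.2 ?_⟩
  rintro (_ | s) hs
  exacts [hs.elim, hUF hs]

lemma exists_secondCountable_t1_topology {Γ : Type*} (hΓ : #Γ ≤ 𝔠) :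
    ∃ _ : TopologicalSpace Γ, SecondCountableTopology Γ ∧ T1Space Γ := by
  obtain ⟨f⟩ : Nonempty (Γ ↪ ℝ) := by
    rw [← lift_mk_le', mk_real, lift_continuum]
    simpa using hΓ
  let _ : TopologicalSpace Γ := .induced f inferInstance
  have hf : IsEmbedding f := ⟨⟨rfl⟩, f.injective⟩
  exact ⟨_, hf.secondCountableTopology, hf.t1Space⟩

lemma exists_bipartite_graph_isolatesCompl {Γ : Type u} [Infinite Γ] (hΓ : #Γ ≤ 𝔠) :
    ∃ (G : SimpleGraph Γ) (A : Set Γ), A.Countable ∧ #(Aᶜ : Set Γ) = #Γ ∧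
      G.IsIndepSet A ∧ G.IsIndepSet Aᶜ ∧ IsolatesCompl G A := by
  obtain ⟨_, _, _⟩ := exists_secondCountable_t1_topology hΓ
  let 𝒰 := countableBasis Γ
  have : Countable 𝒰 := (countable_countableBasis Γ).to_subtype
  have hcard : #Γ = #(𝒰 ⊕ Γ) := by
    rw [mk_sum, lift_id, lift_id]
    exact (add_eq_right (aleph0_le_mk Γ) (mk_le_aleph0.trans (aleph0_le_mk Γ))).symm
  obtain ⟨e⟩ := Cardinal.eq.1 hcard
  have hcompl : (e ⁻¹' Set.range Sum.inl)ᶜ = e ⁻¹' Set.range Sum.inr := by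
    rw [← Set.preimage_compl, Set.compl_range_inl]
  refine ⟨(incidenceGraph 𝒰).comap e, e ⁻¹' Set.range Sum.inl,
    (Set.countable_range _).preimage e.injective, ?_,
    isIndepSet_preimage_comap e.injective (isIndepSet_incidenceGraph_range_inl 𝒰), ?_,
    (isolatesCompl_incidenceGraph (isBasis_countableBasis Γ)).comap e⟩
  · rw [hcompl, mk_preimage_equiv, mk_range_eq _ Sum.inr_injective]
  · exact hcompl ▸ isIndepSet_preimage_comap e.injective (isIndepSet_incidenceGraph_range_inr 𝒰)

end IncidenceGraph

theorem exists_quadratic_with_separable_and_large_maximal_zero_subspaces_general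
    (Γ : Type*) [Infinite Γ] (hΓ : #Γ ≤ 𝔠) :
    ∃ B : ell1 Γ →L[ℂ] ell1 Γ →L[ℂ] ℂ,
      (∀ x y : ell1 Γ, B x y = B y x) ∧
      ∃ Y₁ Y₂ : Submodule ℂ (ell1 Γ),
        IsMaximalZeroSubspace (fun x => B x x) Y₁ ∧
        IsSeparable (Y₁ : Set (ell1 Γ)) ∧
        IsMaximalZeroSubspace (fun x => B x x) Y₂ ∧
        densityChar ↥Y₂ = #Γ := by
  obtain ⟨G, A, hAcount, hAcard, hA, hAc, hiso⟩ := exists_bipartite_graph_isolatesCompl hΓ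
  obtain ⟨Y₂, hY₂, hmax⟩ :=
    exists_le_isMaximalZeroSubspace fun _ => adjacencyForm_self_eq_zero hAc
  have hupper : densityChar Y₂ ≤ #Γ :=
    calc densityChar Y₂ ≤ max ℵ₀ (densityChar (ell1 Γ)) := densityChar_coe_le _
      _ ≤ max ℵ₀ #Γ := max_le (le_max_left _ _) (densityChar_ell1_le Γ)
      _ = #Γ := max_eq_right (aleph0_le_mk Γ)
  have hlower : #Γ ≤ densityChar Y₂ := hAcard ▸ mk_le_densityChar_of_supportedOn_le hY₂
  exact ⟨adjacencyForm G, adjacencyForm_comm G, supportedOn A, Y₂,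
    isMaximalZeroSubspace_supportedOn hA hiso, isSeparable_supportedOn hAcount, hmax,
    hupper.antisymm hlower⟩

/-- There is a continuous quadratic functional on `ℓ₁(𝔠)` (i.e., `x ↦ B x x` for a continuous
symmetric bilinear form `B` on `ℓ₁` over an index set of cardinality continuum) having a
separable maximal zero subspace and also a maximal zero subspace of density `𝔠`. -/
theorem exists_quadratic_with_separable_and_large_maximal_zero_subspaces
    (Γ : Type) (hΓ : Cardinal.mk Γ = Cardinal.continuum) :
    ∃ B : ell1 Γ →L[ℂ] ell1 Γ →L[ℂ] ℂ,
      (∀ x y : ell1 Γ, B x y = B y x) ∧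
      ∃ Y₁ Y₂ : Submodule ℂ (ell1 Γ),
        IsMaximalZeroSubspace (fun x => B x x) Y₁ ∧
        TopologicalSpace.IsSeparable (Y₁ : Set (ell1 Γ)) ∧
        IsMaximalZeroSubspace (fun x => B x x) Y₂ ∧
        densityChar ↥Y₂ = Cardinal.continuum := by
  have : Infinite Γ := infinite_iff.2 (hΓ ▸ aleph0_le_continuum)
  exact hΓ ▸ exists_quadratic_with_separable_and_large_maximal_zero_subspaces_general Γ hΓ.le

end
end

section
/- Let X be an infinite-dimensional complex Banach space and let P : X → ℂ be a continuous polynomial with P(0) = 0 (i.e., P is a finite sum of continuous homogeneous polynomials of degrees ≥ 1). Then there is an infinite-dimensional linear subspace Y ⊆ X such that P(y) = 0 for every y ∈ Y. -/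
noncomputable section

/-!
Every multilinear form of positive degree, symmetric or not, vanishes identically on some
infinite-dimensional subspace of any given one; applying this to the homogeneous components one
after the other proves the theorem. The proof is by induction on the number `n` of arguments of
the form `A`. Fixing some but not all arguments of `A` to be elements of a finite set `s` gives
finitely many forms of smaller degree, so by induction one can pass to an infinite-dimensional
subspace `Y` on which all of them vanish. Choose `u ∈ Y` and then `v` in an analogous subspace of
`Y` for `{u}`: no mixed terms survive in `A (l v + u, …, l v + u) = l ^ n A (v, …, v) + A (u, …,
u)`, and an `n`-th root gives a zero of this expression. Repeating the choice produces a linearly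
independent sequence on whose tuples `A` vanishes: group the entries of a tuple according to
whether they have the largest index.
-/

section Sequences

theorem exists_seq_forall_image_Iio {α : Type*} (R : Set α → α → Prop)
    (h : ∀ s : Set α, s.Finite → ∃ y, R s y) :
    ∃ x : ℕ → α, ∀ n, R (x '' Set.Iio n) (x n) := by
  have : Nonempty α := let ⟨y, _⟩ := h ∅ Set.finite_empty; ⟨y⟩
  choose! next hnext using h
  let x : ℕ → α := wellFounded_lt.fix fun n prev => next (Set.range fun m : Set.Iio n => prev m m.2)
  have hx (n : ℕ) : x n = next (x '' Set.Iio n) := by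
    rw [Set.image_eq_range]
    exact wellFounded_lt.fix_eq _ n
  refine ⟨x, fun n => ?_⟩
  rw [hx n]
  exact hnext _ ((Set.finite_Iio n).image x)

variable {K V : Type*} [DivisionRing K] [AddCommGroup V] [Module K V]

theorem linearIndependent_of_notMem_span_image_Iio {x : ℕ → V}
    (hx : ∀ n, x n ∉ Submodule.span K (x '' Set.Iio n)) : LinearIndependent K x := by
  have hIio (n : ℕ) : LinearIndepOn K x (Set.Iio n) := by
    induction n with
    | zero => simp
    | succ n ih =>
      rw [← Order.succ_eq_add_one, Order.Iio_succ_eq_insert]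
      exact ih.insert (hx n)
  rw [← linearIndepOn_univ_iff, ← Set.iUnion_Iio]
  exact linearIndepOn_iUnion_of_directed
    (Monotone.directed_le fun _ _ hmn => Set.Iio_subset_Iio hmn) hIio

theorem not_finiteDimensional_span_range {ι : Type*} [Infinite ι] {x : ι → V}
    (hx : LinearIndependent K x) : ¬ FiniteDimensional K (Submodule.span K (Set.range x)) :=
  Module.not_finite_of_infinite_basis (Module.Basis.span hx)

theorem exists_mem_notMem_span_of_finite {W : Submodule K V} (hW : ¬ FiniteDimensional K W)
    {s : Set V} (hs : s.Finite) : ∃ y ∈ W, y ∉ Submodule.span K s := by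
  have := FiniteDimensional.span_of_finite K hs
  exact SetLike.not_le_iff_exists.1 fun hle => hW (Submodule.finiteDimensional_of_le hle)

end Sequences

section Dense

variable {K V : Type*} [DivisionRing K] [AddCommGroup V] [Module K V]

/-- A property of subspaces is dense if every infinite-dimensional subspace contains an
infinite-dimensional subspace with this property. This is density in the sense of forcing, in the
poset of infinite-dimensional subspaces. -/
def IsDenseProperty (Q : Submodule K V → Prop) : Prop :=
  ∀ W : Submodule K V, ¬ FiniteDimensional K W → ∃ Y ≤ W, ¬ FiniteDimensional K Y ∧ Q Y

theorem IsDenseProperty.forall_finite {κ : Type*} [Finite κ] {Q : κ → Submodule K V → Prop}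
    (hanti : ∀ k, Antitone (Q k)) (hdense : ∀ k, IsDenseProperty (Q k)) :
    IsDenseProperty fun Y => ∀ k, Q k Y := by
  classical
  cases nonempty_fintype κ
  suffices hfinset : ∀ t : Finset κ, IsDenseProperty fun Y => ∀ k ∈ t, Q k Y by
    simpa using hfinset Finset.univ
  intro t W hW
  induction t using Finset.induction_on with
  | empty => exact ⟨W, le_rfl, hW, by simp⟩
  | insert k t _ ih =>
    obtain ⟨Y, hYW, hYinf, hYt⟩ := ih
    obtain ⟨Z, hZY, hZinf, hZk⟩ := hdense k Y hYinf
    refine ⟨Z, hZY.trans hYW, hZinf, Finset.forall_mem_insert _ _ _ |>.2 ⟨hZk, ?_⟩⟩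
    exact fun j hj => hanti j hZY (hYt j hj)

end Dense

section NullOn

variable {R V M ι : Type*} [CommSemiring R] [AddCommMonoid V] [Module R V] [AddCommMonoid M]
  [Module R M]

/-- A multilinear map is null on `S` if it vanishes on all tuples of elements of `S`. In
particular, the homogeneous polynomial `x ↦ A (x, …, x)` then vanishes on `S`. -/
def IsNullOn (A : MultilinearMap R (fun _ : ι => V) M) (S : Set V) : Prop :=
  ∀ v : ι → V, (∀ i, v i ∈ S) → A v = 0

/-- A multilinear map is mixed null on `S` and `T` if it vanishes on all tuples that have some
entries in `S` and the others in `T`, both kinds occurring. The set `I` of the places of the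
former is part of the data since `S` and `T` may intersect. -/
def IsMixedNullOn [Fintype ι] (A : MultilinearMap R (fun _ : ι => V) M) (S T : Set V) : Prop :=
  ∀ I : Finset ι, I.Nonempty → I ≠ Finset.univ →
    ∀ v : ι → V, (∀ i ∈ I, v i ∈ S) → (∀ i ∉ I, v i ∈ T) → A v = 0

theorem IsNullOn.mono {A : MultilinearMap R (fun _ : ι => V) M} {S T : Set V}
    (hA : IsNullOn A T) (hST : S ⊆ T) : IsNullOn A S :=
  fun v hv => hA v fun i => hST (hv i)

theorem IsNullOn.span [Finite ι] {A : MultilinearMap R (fun _ : ι => V) M} {S : Set V}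
    (hA : IsNullOn A S) : IsNullOn A (Submodule.span R S) := by
  classical
  cases nonempty_fintype ι
  suffices hfinset : ∀ (I : Finset ι) (v : ι → V), (∀ i ∈ I, v i ∈ Submodule.span R S) →
      (∀ i ∉ I, v i ∈ S) → A v = 0 from
    fun v hv => hfinset Finset.univ v (fun i _ => hv i) (by simp)
  intro I
  induction I using Finset.induction_on with
  | empty => exact fun v _ hv => hA v fun i => hv i (Finset.notMem_empty i)
  | insert a I ha ih =>
    intro v hspan hS
    have hker : Submodule.span R S ≤ (A.toLinearMap v a).ker := by
      refine Submodule.span_le.2 fun w hw => ih (Function.update v a w) (fun i hi => ?_)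
        fun i hi => ?_
      · rw [Function.update_of_ne (ne_of_mem_of_not_mem hi ha)]
        exact hspan i (Finset.mem_insert_of_mem hi)
      · rcases eq_or_ne i a with rfl | hia
        · rwa [Function.update_self]
        · rw [Function.update_of_ne hia]
          exact hS i (by simp [hia, hi])
    simpa using hker (hspan a (Finset.mem_insert_self a I))

variable [Fintype ι] {A : MultilinearMap R (fun _ : ι => V) M}

theorem IsMixedNullOn.mono {S S' T T' : Set V} (hA : IsMixedNullOn A S' T') (hS : S ⊆ S')
    (hT : T ⊆ T') : IsMixedNullOn A S T :=
  fun I hI hIuniv v hvS hvT =>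
    hA I hI hIuniv v (fun i hi => hS (hvS i hi)) fun i hi => hT (hvT i hi)

theorem IsMixedNullOn.map_const_add [Nonempty ι] {S T : Set V} (hA : IsMixedNullOn A S T)
    {x y : V} (hx : x ∈ S) (hy : y ∈ T) :
    A (fun _ => x + y) = A (fun _ => x) + A fun _ => y := by
  classical
  calc A (fun _ => x + y)
      = ∑ I : Finset ι, A (I.piecewise (fun _ => x) fun _ => y) :=
        A.map_add_univ (fun _ => x) fun _ => y
    _ = A (Finset.univ.piecewise (fun _ => x) fun _ => y)
          + A ((∅ : Finset ι).piecewise (fun _ => x) fun _ => y) := by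
        refine Fintype.sum_eq_add _ _ Finset.univ_nonempty.ne_empty fun I hI => ?_
        refine hA I (Finset.nonempty_iff_ne_empty.2 hI.2) hI.1 _ (fun i hi => ?_) fun i hi => ?_
        · rwa [Finset.piecewise_eq_of_mem _ _ _ hi]
        · rwa [Finset.piecewise_eq_of_notMem _ _ _ hi]
    _ = A (fun _ => x) + A fun _ => y := by
        rw [Finset.piecewise_univ, Finset.piecewise_empty]

theorem isNullOn_range_of_isMixedNullOn [Nonempty ι] {x : ℕ → V}
    (hconst : ∀ n, A (fun _ => x n) = 0)
    (hmixed : ∀ n, IsMixedNullOn A {x n} (x '' Set.Iio n)) : IsNullOn A (Set.range x) := by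
  intro v hv
  choose f hf using hv
  obtain rfl : x ∘ f = v := funext hf
  obtain ⟨a, hmax⟩ := Finite.exists_max f
  by_cases hall : ∀ i, f i = f a
  · rw [← hconst (f a)]
    exact congrArg A (funext fun i => congrArg x (hall i))
  · refine hmixed (f a) {i | f i = f a} ⟨a, by simp⟩ ?_ _ (fun i hi => ?_) fun i hi => ?_
    · simpa [Finset.eq_univ_iff_forall] using hall
    · exact congrArg x (Finset.mem_filter.1 hi).2
    · exact Set.mem_image_of_mem x ((hmax i).lt_of_ne (by simpa using hi))

end NullOn

section Existence

variable {K V : Type*} [Field K] [AddCommGroup V] [Module K V]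

theorem isDenseProperty_isMixedNullOn {M ι : Type*} [AddCommMonoid M] [Module K M]
    [Fintype ι] (A : MultilinearMap K (fun _ : ι => V) M)
    (hfewer : ∀ I : Finset ι, I.Nonempty → I ≠ Finset.univ →
      ∀ B : MultilinearMap K (fun _ : I => V) M,
        IsDenseProperty fun Y : Submodule K V => IsNullOn B Y)
    {s : Set V} (hs : s.Finite) :
    IsDenseProperty fun Y : Submodule K V => IsMixedNullOn A Y s := by
  classical
  have := hs.to_subtype
  let B (I : Finset ι) (z : ι → s) : MultilinearMap K (fun _ : I => V) M :=
    A.domDomRestrict (· ∈ I) fun i => z i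
  have hdense := IsDenseProperty.forall_finite
    (κ := {I : Finset ι // I.Nonempty ∧ I ≠ Finset.univ} × (ι → s))
    (Q := fun k (Y : Submodule K V) => IsNullOn (B k.1 k.2) Y)
    (fun _ _ _ hYZ hZ => hZ.mono hYZ)
    fun k => hfewer k.1 k.1.2.1 k.1.2.2 _
  intro W hW
  obtain ⟨Y, hYW, hYinf, hY⟩ := hdense W hW
  refine ⟨Y, hYW, hYinf, fun I hI hIuniv v hvY hvs => ?_⟩
  obtain ⟨j, hj⟩ : ∃ j, j ∉ I := by simpa [Finset.eq_univ_iff_forall] using hIuniv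
  let z (i : ι) : s := if hi : i ∈ I then ⟨v j, hvs j hj⟩ else ⟨v i, hvs i hi⟩
  have hBv : B I z (fun i => v i) = 0 := hY (⟨I, hI, hIuniv⟩, z) _ fun i => hvY i i.2
  rw [← hBv, MultilinearMap.domDomRestrict_apply]
  congr 1
  ext i
  by_cases hi : i ∈ I <;> simp [z, hi]

variable [IsAlgClosed K]

theorem exists_map_const_smul_add_eq_zero {ι : Type*} [Fintype ι] [Nonempty ι]
    {A : MultilinearMap K (fun _ : ι => V) K} {Z : Submodule K V} {u v : V}
    (hA : IsMixedNullOn A Z {u}) (hv : v ∈ Z) (hAv : A (fun _ => v) ≠ 0) :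
    ∃ l : K, A (fun _ => l • v + u) = 0 := by
  obtain ⟨l, hl⟩ := IsAlgClosed.exists_pow_nat_eq (-A (fun _ => u) / A fun _ => v)
    (Fintype.card_pos (α := ι))
  refine ⟨l, ?_⟩
  calc A (fun _ => l • v + u)
      = A (fun _ => l • v) + A fun _ => u :=
        hA.map_const_add (Z.smul_mem l hv) (Set.mem_singleton u)
    _ = l ^ Fintype.card ι * A (fun _ => v) + A fun _ => u := by
        rw [A.map_smul_univ (fun _ => l) fun _ => v, Finset.prod_const, Finset.card_univ,
          smul_eq_mul]
    _ = 0 := by rw [hl, div_mul_cancel₀ _ hAv, neg_add_cancel]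

theorem exists_notMem_span_map_const_eq_zero {ι : Type*} [Fintype ι] [Nonempty ι]
    {A : MultilinearMap K (fun _ : ι => V) K}
    (hmixed : ∀ s : Set V, s.Finite →
      IsDenseProperty fun Y : Submodule K V => IsMixedNullOn A Y s)
    {Y : Submodule K V} (hY : ¬ FiniteDimensional K Y) {s : Set V} (hs : s.Finite) :
    ∃ y ∈ Y, y ∉ Submodule.span K s ∧ A (fun _ => y) = 0 := by
  obtain ⟨u, huY, hus⟩ := exists_mem_notMem_span_of_finite hY hs
  obtain ⟨Z, hZY, hZinf, hZ⟩ := hmixed {u} (Set.finite_singleton u) Y hY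
  obtain ⟨v, hvZ, hv⟩ := exists_mem_notMem_span_of_finite hZinf (hs.insert u)
  have hspan : Submodule.span K s ≤ Submodule.span K (insert u s) :=
    Submodule.span_mono (Set.subset_insert u s)
  by_cases hAv : A (fun _ => v) = 0
  · exact ⟨v, hZY hvZ, fun hvs => hv (hspan hvs), hAv⟩
  obtain ⟨l, hl⟩ := exists_map_const_smul_add_eq_zero hZ hvZ hAv
  refine ⟨l • v + u, Y.add_mem (Y.smul_mem l (hZY hvZ)) huY, fun hmem => ?_, hl⟩
  rcases eq_or_ne l 0 with rfl | hl0
  · exact hus (by simpa using hmem)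
  · have hu : u ∈ Submodule.span K (insert u s) := Submodule.subset_span (Set.mem_insert u s)
    exact hv ((Submodule.smul_mem_iff _ hl0).1 ((Submodule.add_mem_iff_left _ hu).1 (hspan hmem)))

theorem isDenseProperty_isNullOn_of_isMixedNullOn {ι : Type*} [Fintype ι] [Nonempty ι]
    {A : MultilinearMap K (fun _ : ι => V) K}
    (hmixed : ∀ s : Set V, s.Finite →
      IsDenseProperty fun Y : Submodule K V => IsMixedNullOn A Y s) :
    IsDenseProperty fun Y : Submodule K V => IsNullOn A Y := by
  intro W hW
  have hstep (s : Set V) (hs : s.Finite) : ∃ y, y ∈ W ∧ y ∉ Submodule.span K s ∧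
      A (fun _ => y) = 0 ∧ IsMixedNullOn A {y} s := by
    obtain ⟨Y, hYW, hYinf, hY⟩ := hmixed s hs W hW
    obtain ⟨y, hyY, hys, hAy⟩ := exists_notMem_span_map_const_eq_zero hmixed hYinf hs
    exact ⟨y, hYW hyY, hys, hAy, hY.mono (Set.singleton_subset_iff.2 hyY) subset_rfl⟩
  obtain ⟨x, hx⟩ := exists_seq_forall_image_Iio _ hstep
  choose hxW hxspan hxconst hxmixed using hx
  exact ⟨Submodule.span K (Set.range x), Submodule.span_le.2 (Set.range_subset_iff.2 hxW),
    not_finiteDimensional_span_range (linearIndependent_of_notMem_span_image_Iio hxspan),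
    (isNullOn_range_of_isMixedNullOn hxconst hxmixed).span⟩

theorem isDenseProperty_isNullOn {ι : Type*} [Finite ι] [Nonempty ι]
    (A : MultilinearMap K (fun _ : ι => V) K) :
    IsDenseProperty fun Y : Submodule K V => IsNullOn A Y := by
  cases nonempty_fintype ι
  induction hn : Fintype.card ι using Nat.strong_induction_on generalizing ι with
  | _ n ih =>
    refine isDenseProperty_isNullOn_of_isMixedNullOn fun s hs =>
      isDenseProperty_isMixedNullOn A (fun I hI hIuniv B => ?_) hs
    have := hI.to_subtype
    have hcard : Fintype.card I < n := by
      rw [← hn, Fintype.card_coe]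
      exact (Finset.card_lt_iff_ne_univ I).2 hIuniv
    exact ih _ hcard B _ rfl

end Existence

theorem exists_infinite_dimensional_zero_subspace_general
    {K V κ : Type*} [Field K] [IsAlgClosed K] [AddCommGroup V] [Module K V]
    (hV : ¬ FiniteDimensional K V) [Finite κ] {ι : κ → Type*} [∀ k, Finite (ι k)]
    [∀ k, Nonempty (ι k)] (A : ∀ k, MultilinearMap K (fun _ : ι k => V) K) :
    ∃ Y : Submodule K V, ¬ FiniteDimensional K Y ∧ ∀ k, IsNullOn (A k) Y := by
  have htop : ¬ FiniteDimensional K (⊤ : Submodule K V) :=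
    fun h => hV (Module.Finite.equiv Submodule.topEquiv)
  obtain ⟨Y, -, hY⟩ := IsDenseProperty.forall_finite
    (fun k _ _ hYZ (hZ : IsNullOn (A k) _) => hZ.mono hYZ)
    (fun k => isDenseProperty_isNullOn (A k)) ⊤ htop
  exact ⟨Y, hY⟩

/-- (Plichko–Zagorodnyuk) Let `X` be an infinite-dimensional complex Banach space and let
`P : X → ℂ` be a continuous polynomial with `P 0 = 0`, i.e., a finite sum of continuous
homogeneous polynomials of degrees `≥ 1` (each given by a continuous symmetric multilinear
form). Then there is an infinite-dimensional linear subspace `Y ⊆ X` with `P y = 0` for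
every `y ∈ Y`. -/
theorem exists_infinite_dimensional_zero_subspace
    {X : Type*} [NormedAddCommGroup X] [NormedSpace ℂ X] [CompleteSpace X]
    (hX : ¬ FiniteDimensional ℂ X) (P : X → ℂ)
    (hP : ∃ (N : ℕ) (d : Fin N → ℕ)
        (A : ∀ i, ContinuousMultilinearMap ℂ (fun _ : Fin (d i) => X) ℂ),
      (∀ i, 1 ≤ d i) ∧
      (∀ i (x : Fin (d i) → X) (σ : Equiv.Perm (Fin (d i))), A i (x ∘ σ) = A i x) ∧
      ∀ x, P x = ∑ i, A i fun _ => x) :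
    ∃ Y : Submodule ℂ X, ¬ FiniteDimensional ℂ ↥Y ∧ ∀ y ∈ Y, P y = 0 := by
  obtain ⟨N, d, A, hd, -, hPA⟩ := hP
  have (i : Fin N) : Nonempty (Fin (d i)) := ⟨⟨0, hd i⟩⟩
  obtain ⟨Y, hYinf, hY⟩ :=
    exists_infinite_dimensional_zero_subspace_general hX fun i => (A i).toMultilinearMap
  exact ⟨Y, hYinf, fun y hy => (hPA y).trans <|
    Finset.sum_eq_zero fun i _ => hY i (fun _ => y) fun _ => hy⟩

end
end
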